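/- Let n ≥ 1 and let f : ℝⁿ → ℝ be real analytic on all of ℝⁿ. Let ξ : [0,∞) → ℝⁿ be a C¹ curve satisfying the gradient flow equation ξ'(t) = -∇f(ξ(t)) for all t ≥ 0, and assume that the trajectory {ξ(t) : t ≥ 0} is bounded. Then the limit ξ₀ = lim_{t→∞} ξ(t) exists, ξ₀ is a critical point of f (i.e. ∇f(ξ₀) = 0), and there exist constants β > 0, C > 0 and T ≥ 0 such that |ξ(t) - ξ₀| ≤ C·t^{-β} for all t ≥ T. -/

import Mathlib

/-!
The convergence rests on the Łojasiewicz gradient inequality `c |f x - f x₀| ^ θ ≤ ‖∇f x‖` near `x₀`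
with `1 / 2 < θ < 1` (`lojasiewicz`). Given it at an accumulation point `ξ₀` of the trajectory, the
function `(f (ξ t) - f ξ₀) ^ (1 - θ)` decreases at least as fast as a multiple of the arc length
grows. This traps the trajectory near `ξ₀`, bounds its distance to `ξ₀`, and yields the polynomial
decay of the energy, hence of the distance (`rate`).

The gradient inequality is easy for a monomial times an analytic unit, by the Euler identity
(`NC.gradient_bound`), and is transported to a general analytic function by a local monomialization
(`resolution`). The weak form of resolution that suffices concerns one sequence `x_n → 0` and one
ultrafilter `U`: the sequence is lifted, `U`-almost everywhere, through an analytic germ `φ` at the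
origin for which `f ∘ φ` is a monomial times a unit. The ultrafilter makes every ratio of sequences
either convergent or infinite and every sign constant, so that each blow-up is followed in a single
chart.

Monomialization is proved by induction on the number of variables. A linear change of variables makes
`f` regular of some order `d` in the last variable `s` (`exists_regular`), and an inner induction on `d`
is carried out (`Q_of_P`). The implicit function theorem brings `f` to Tschirnhausen form
`∑_{i < d} c_i s ^ i + s ^ d u` with `c_{d-1} = 0`. The induction hypothesis in fewer variables, applied
to the `c_i` and to differences of suitable powers of them, makes the `c_i` monomials with comparable
exponents, so that after a power substitution `c_i = m ^ (d - i) b_i` for one monomial `m`, some `b_i`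
being a unit (`normal`). Blowing up, either `s / m` is bounded and the order in `s` drops
(`core_bounded`), or `m / s` tends to `0` and `f` becomes `s ^ d` times a unit (`core_unbounded`).
-/

set_option linter.unusedSectionVars false

namespace Loj

open Filter Topology

/-! ### Hadamard division -/

section Division

variable {E : Type*} [NormedAddCommGroup E] [NormedSpace ℝ E]

/-- Power series of the Hadamard quotient `(F - F ∘ π) / ℓ`, where `p` is the power series of `F`
and `x = π x + ℓ x • e`. The term of degree `k` is the sum over `i` of `p (k + 1)` evaluated with
`e` in slot `i`, with `x` in the earlier slots and `π x` in the later ones. -/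
noncomputable def divSeries (p : FormalMultilinearSeries ℝ E ℝ) (π : E →L[ℝ] E) (e : E) :
    FormalMultilinearSeries ℝ E ℝ := fun k =>
  ∑ i : Fin (k + 1), ((p (k + 1)).curryMid i e).compContinuousLinearMap
    (fun j : Fin k => if j.castSucc < i then ContinuousLinearMap.id ℝ E else π)

/-- Replacing the arguments `π x` of `p (k + 1)` by `x` one slot at a time gives a telescoping sum,
each step of which carries the factor `ℓ x`. -/
lemma divSeries_apply (p : FormalMultilinearSeries ℝ E ℝ) (π : E →L[ℝ] E) (ℓ : E →L[ℝ] ℝ)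
    (e : E) (hdec : ∀ x, π x + ℓ x • e = x) (k : ℕ) (x : E) :
    ℓ x * (divSeries p π e k fun _ => x) =
      (p (k + 1) fun _ => x) - (p (k + 1) fun _ => π x) := by
  set w : ℕ → Fin (k + 1) → E := fun m j => if (j : ℕ) < m then x else π x with hw
  have tele : ∀ i : Fin (k + 1), p (k + 1) (w (i + 1)) - p (k + 1) (w i) =
      ℓ x * ((p (k + 1)).curryMid i e).compContinuousLinearMap
        (fun j : Fin k => if j.castSucc < i then ContinuousLinearMap.id ℝ E else π)
        (fun _ => x) := by
    intro i
    have h1 : w (i + 1) = Function.update (w i) i (π x + ℓ x • e) := by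
      ext1 j
      by_cases hj : j = i
      · subst hj; simp [hw, hdec]
      · have : (j : ℕ) ≠ i := fun h => hj (Fin.ext h)
        have h' : (j : ℕ) < i + 1 ↔ (j : ℕ) < i := by omega
        simp [hw, hj, h']
    have h2 : w i = Function.update (w i) i (π x) := by
      ext1 j
      by_cases hj : j = i
      · subst hj; simp [hw]
      · simp [hj]
    have h3 : Function.update (w i) i e = i.insertNth e (fun j : Fin k =>
        (if j.castSucc < i then ContinuousLinearMap.id ℝ E else π) x) := by
      refine (Fin.insertNth_eq_iff.2 ⟨by simp, ?_⟩).symm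
      ext1 j
      simp only [Fin.removeNth, hw]
      rw [Function.update_of_ne (Fin.succAbove_ne i j)]
      by_cases hj : j.castSucc < i
      · have : ((i.succAbove j : Fin (k+1)) : ℕ) < i := by
          rw [Fin.succAbove_of_castSucc_lt _ _ hj]; exact hj
        simp [hj, this]
      · have : ¬ ((i.succAbove j : Fin (k+1)) : ℕ) < i := by
          rw [Fin.succAbove_of_le_castSucc _ _ (not_lt.1 hj)]
          have := not_lt.1 hj
          rw [Fin.le_def] at this
          simp at this ⊢; omega
        simp [hj, this]
    rw [h1, (p (k + 1)).map_update_add, (p (k + 1)).map_update_smul, ← h2, h3]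
    simp
  have hx : (fun _ => x) = w (k + 1) := by
    ext1 j
    have := j.2
    simp [hw, this]
  have hπ : (fun _ => π x) = w 0 := by
    ext1 j; simp [hw]
  have e1 : (p (k + 1) fun _ => x) = p (k + 1) (w (k + 1)) := by rw [← hx]
  have e2 : (p (k + 1) fun _ => π x) = p (k + 1) (w 0) := by rw [← hπ]
  rw [e1, e2, ← Finset.sum_range_sub (fun m => p (k + 1) (w m)),
    ← Fin.sum_univ_eq_sum_range (fun m => p (k + 1) (w (m + 1)) - p (k + 1) (w m)),
    Finset.sum_congr rfl (fun i _ => tele i), ← Finset.mul_sum]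
  simp [divSeries]

lemma divSeries_norm_le (p : FormalMultilinearSeries ℝ E ℝ) (π : E →L[ℝ] E) (e : E) (k : ℕ) :
    ‖divSeries p π e k‖ ≤ (k + 1) * (‖p (k + 1)‖ * ‖e‖ * (1 + ‖π‖) ^ k) := by
  refine (norm_sum_le _ _).trans ?_
  have : ∀ i ∈ (Finset.univ : Finset (Fin (k+1))),
      ‖((p (k + 1)).curryMid i e).compContinuousLinearMap
      (fun j : Fin k => if j.castSucc < i then ContinuousLinearMap.id ℝ E else π)‖ ≤
      ‖p (k + 1)‖ * ‖e‖ * (1 + ‖π‖) ^ k := by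
    intro i _
    refine (ContinuousMultilinearMap.norm_compContinuousLinearMap_le _ _).trans ?_
    have h1 : ‖(p (k + 1)).curryMid i e‖ ≤ ‖p (k + 1)‖ * ‖e‖ := by
      refine ((p (k + 1)).curryMid i).le_opNorm e |>.trans ?_
      rw [ContinuousMultilinearMap.norm_curryMid]
    have h2 : ∏ j : Fin k, ‖(if j.castSucc < i then ContinuousLinearMap.id ℝ E else π)‖ ≤
        (1 + ‖π‖) ^ k := by
      refine (Finset.prod_le_prod (g := fun _ => 1 + ‖π‖) (fun _ _ => norm_nonneg _)
        fun j _ => ?_).trans (by simp)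
      split_ifs
      · exact ContinuousLinearMap.norm_id_le.trans (by simp)
      · simp
    gcongr
  refine (Finset.sum_le_card_nsmul _ _ _ this).trans ?_
  simp

/-- Hadamard division: `F - F ∘ π` is divisible by the linear form `ℓ` among analytic germs, where
`π` is a projection onto the kernel of `ℓ`. -/
lemma exists_div {F : E → ℝ} (hF : AnalyticAt ℝ F 0) (π : E →L[ℝ] E) (ℓ : E →L[ℝ] ℝ)
    (e : E) (hdec : ∀ x, π x + ℓ x • e = x) :
    ∃ G : E → ℝ, AnalyticAt ℝ G 0 ∧ ∀ᶠ x in 𝓝 (0 : E), F x = F (π x) + ℓ x * G x := by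
  obtain ⟨p, hp⟩ := hF
  obtain ⟨r, hr⟩ := id hp
  obtain ⟨C, r', hC, hr', hb⟩ := p.le_mul_pow_of_radius_pos hp.radius_pos
  set q := divSeries p π e
  have hq : 0 < q.radius := by
    set A : ℝ := 2 * (1 + ‖π‖) * r' with hA
    have hApos : 0 < A := by positivity
    have : ENNReal.ofReal (A⁻¹) ≤ q.radius := by
      refine FormalMultilinearSeries.le_radius_of_bound (r := (A⁻¹).toNNReal) q
        (C * r' * ‖e‖) fun k => ?_
      rw [Real.coe_toNNReal _ (by positivity)]
      have h1 := divSeries_norm_le p π e k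
      have h2 : ((k : ℝ) + 1) ≤ 2 ^ k := by exact_mod_cast Nat.lt_two_pow_self
      calc ‖q k‖ * A⁻¹ ^ k ≤ (2 ^ k * ((C * r' ^ (k + 1)) * ‖e‖ * (1 + ‖π‖) ^ k)) * A⁻¹ ^ k := by
            gcongr
            refine h1.trans ?_
            gcongr
            exact hb _
        _ = C * r' * ‖e‖ * ((A * A⁻¹) ^ k) := by
            rw [mul_pow A, show A ^ k = 2 ^ k * (1 + ‖π‖) ^ k * r' ^ k by rw [hA, mul_pow, mul_pow]]
            ring
        _ = C * r' * ‖e‖ := by rw [mul_inv_cancel₀ hApos.ne']; simp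
    refine lt_of_lt_of_le ?_ this
    rw [ENNReal.ofReal_pos]; positivity
  have hG := q.hasFPowerSeriesOnBall hq
  refine ⟨q.sum, hG.analyticAt, ?_⟩
  have c1 : Tendsto π (𝓝 0) (𝓝 0) := by simpa using π.continuous.tendsto 0
  filter_upwards [hp.eventually_hasSum, c1.eventually hp.eventually_hasSum,
    hG.hasFPowerSeriesAt.eventually_hasSum] with x h1 h2 h3
  simp only [zero_add] at h1 h2 h3
  have h4 := (h3.mul_left (ℓ x))
  simp_rw [q, divSeries_apply p π ℓ e hdec] at h4
  have h5 := (hasSum_nat_add_iff' 1).2 (h1.sub h2)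
  have := h4.unique h5
  have e0 : (p 0 fun _ => x) = (p 0 fun _ => π x) := by
    congr 1; ext1 i; exact i.elim0
  simp [e0] at this
  linarith

end Division

/-! ### Normal crossings -/

section NC

variable {ι κ : Type} [Fintype ι] [Fintype κ]
variable {E F : Type*} [NormedAddCommGroup E] [NormedSpace ℝ E]
  [NormedAddCommGroup F] [NormedSpace ℝ F]

/-- The monomial with exponents `α` in the linear coordinates `c`. -/
def mon (c : E ≃L[ℝ] (ι → ℝ)) (α : ι → ℕ) (x : E) : ℝ := ∏ i, c x i ^ α i

/-- Normal crossings at the origin in the linear coordinates `c`: the germ of `f` at `0` is a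
monomial times an analytic unit. -/
def NC (c : E ≃L[ℝ] (ι → ℝ)) (f : E → ℝ) : Prop :=
  ∃ α : ι → ℕ, ∃ u : E → ℝ, AnalyticAt ℝ u 0 ∧ u 0 ≠ 0 ∧ f =ᶠ[𝓝 0] fun x => mon c α x * u x

lemma analyticAt_coord (c : E ≃L[ℝ] (ι → ℝ)) (i : ι) (x : E) :
    AnalyticAt ℝ (fun x => c x i) x :=
  ((ContinuousLinearMap.proj (R := ℝ) (φ := fun _ : ι => ℝ) i).comp
    (c : E →L[ℝ] (ι → ℝ))).analyticAt x

lemma analyticAt_mon (c : E ≃L[ℝ] (ι → ℝ)) (α : ι → ℕ) (x : E) :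
    AnalyticAt ℝ (mon c α) x := by
  have := Finset.analyticAt_fun_prod (𝕜 := ℝ) (Finset.univ : Finset ι)
    (f := fun i (x : E) => c x i ^ α i) (c := x) (fun i _ => (analyticAt_coord c i x).pow _)
  exact this

lemma mon_add (c : E ≃L[ℝ] (ι → ℝ)) (α β : ι → ℕ) (x : E) :
    mon c (α + β) x = mon c α x * mon c β x := by
  simp [mon, pow_add, Finset.prod_mul_distrib]

lemma mon_smul (c : E ≃L[ℝ] (ι → ℝ)) (n : ℕ) (α : ι → ℕ) (x : E) :
    mon c (n • α) x = mon c α x ^ n := by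
  simp [mon, pow_mul', Finset.prod_pow]

lemma mon_single [DecidableEq ι] (c : E ≃L[ℝ] (ι → ℝ)) (j : ι) (x : E) :
    mon c (Pi.single j 1) x = c x j := by
  rw [mon, Finset.prod_eq_single j]
  · simp
  · intro b _ hb; simp [hb]
  · simp

lemma mon_zero (c : E ≃L[ℝ] (ι → ℝ)) (x : E) : mon c 0 x = 1 := by simp [mon]

lemma NC.congr {c : E ≃L[ℝ] (ι → ℝ)} {f g : E → ℝ} (hf : NC c f) (h : f =ᶠ[𝓝 0] g) : NC c g := by
  obtain ⟨α, u, hu, h0, hfu⟩ := hf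
  exact ⟨α, u, hu, h0, h.symm.trans hfu⟩

lemma NC.analyticAt {c : E ≃L[ℝ] (ι → ℝ)} {f : E → ℝ} (hf : NC c f) : AnalyticAt ℝ f 0 := by
  obtain ⟨α, u, hu, h0, hfu⟩ := hf
  exact ((analyticAt_mon c α 0).mul hu).congr hfu.symm

lemma NC.mul {c : E ≃L[ℝ] (ι → ℝ)} {f g : E → ℝ} (hf : NC c f) (hg : NC c g) :
    NC c (fun x => f x * g x) := by
  obtain ⟨α, u, hu, h0, hfu⟩ := hf
  obtain ⟨β, v, hv, h0', hgv⟩ := hg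
  refine ⟨α + β, fun x => u x * v x, hu.mul hv, mul_ne_zero h0 h0', ?_⟩
  filter_upwards [hfu, hgv] with x h1 h2
  rw [h1, h2, mon_add]; ring

lemma NC.of_ne_zero (c : E ≃L[ℝ] (ι → ℝ)) {u : E → ℝ} (hu : AnalyticAt ℝ u 0) (h0 : u 0 ≠ 0) :
    NC c u :=
  ⟨0, u, hu, h0, by simp [mon_zero]⟩

lemma NC.coord (c : E ≃L[ℝ] (ι → ℝ)) (i : ι) : NC c (fun x => c x i) := by
  classical
  exact ⟨Pi.single i 1, fun _ => 1, analyticAt_const, one_ne_zero,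
    by simp only [mon_single, mul_one]; rfl⟩

lemma NC.pow {c : E ≃L[ℝ] (ι → ℝ)} {f : E → ℝ} (hf : NC c f) (n : ℕ) :
    NC c (fun x => f x ^ n) := by
  induction n with
  | zero => simpa using NC.of_ne_zero c (analyticAt_const (v := (1 : ℝ))) one_ne_zero
  | succ n ih => simpa only [pow_succ] using ih.mul hf

lemma NC.prod {c : E ≃L[ℝ] (ι → ℝ)} {K : Type*} (s : Finset K) {f : K → E → ℝ}
    (hf : ∀ k ∈ s, NC c (f k)) : NC c (fun x => ∏ k ∈ s, f k x) := by
  classical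
  induction s using Finset.induction_on with
  | empty => simpa using NC.of_ne_zero c (analyticAt_const (v := (1 : ℝ))) one_ne_zero
  | insert a s ha ih =>
    simp only [Finset.prod_insert ha]
    exact (hf a (by simp)).mul (ih fun k hk => hf k (by simp [hk]))

lemma NC.mon (c : E ≃L[ℝ] (ι → ℝ)) (α : ι → ℕ) : NC c (mon c α) :=
  NC.prod _ fun i _ => (NC.coord c i).pow (α i)

lemma tendsto_zero_of_analyticAt {φ : E → F} (hφ : AnalyticAt ℝ φ 0) (h0 : φ 0 = 0) :
    Tendsto φ (𝓝 0) (𝓝 0) := by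
  simpa [ContinuousAt, h0] using hφ.continuousAt

/-- Normal crossings pull back to normal crossings under a germ whose components all have normal
crossings. -/
lemma NC.comp {c : E ≃L[ℝ] (ι → ℝ)} {d : F ≃L[ℝ] (κ → ℝ)} {φ : E → F} {f : F → ℝ}
    (hf : NC d f) (hφ : AnalyticAt ℝ φ 0) (h0 : φ 0 = 0)
    (hc : ∀ i, NC c (fun x => d (φ x) i)) : NC c (fun x => f (φ x)) := by
  obtain ⟨α, u, hu, hu0, hfu⟩ := hf
  have h1 : NC c (fun x => u (φ x)) :=
    NC.of_ne_zero c (AnalyticAt.fun_comp (h0.symm ▸ hu) hφ) (by rwa [h0])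
  have h2 : NC c (fun x => ∏ i, d (φ x) i ^ α i) := NC.prod _ fun i _ => (hc i).pow (α i)
  exact (h2.mul h1).congr
    (((tendsto_zero_of_analyticAt hφ h0).eventually hfu).mono fun x hx => hx.symm)

/-- Germs of analytic functions at the origin form an integral domain. -/
lemma mul_eventually_zero {f g : E → ℝ} (hf : AnalyticAt ℝ f 0) (hg : AnalyticAt ℝ g 0)
    (h : ∀ᶠ x in 𝓝 0, f x * g x = 0) : f =ᶠ[𝓝 0] 0 ∨ g =ᶠ[𝓝 0] 0 := by
  obtain ⟨r, hr, hB⟩ := Metric.eventually_nhds_iff_ball.1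
    (h.and (hf.eventually_analyticAt.and hg.eventually_analyticAt))
  have hmem : Metric.ball (0 : E) r ∈ 𝓝 0 := Metric.ball_mem_nhds _ hr
  by_cases hz : ∀ x ∈ Metric.ball (0 : E) r, f x = 0
  · left; filter_upwards [hmem] with x hx using hz x hx
  · right
    push Not at hz
    obtain ⟨a, ha, hfa⟩ := hz
    have : g =ᶠ[𝓝 a] 0 := by
      filter_upwards [(hB a ha).2.1.continuousAt.eventually_ne hfa,
        Metric.isOpen_ball.mem_nhds ha] with x hx hxB
      exact (mul_eq_zero.1 (hB x hxB).1).resolve_left hx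
    have := AnalyticOnNhd.eqOn_zero_of_preconnected_of_eventuallyEq_zero
      (fun x hx => (hB x hx).2.2) (convex_ball (0 : E) r).isPreconnected ha this
    filter_upwards [hmem] with x hx using this hx

/-- The points with all coordinates equal to `t` tend to the origin as `t → 0⁺`. -/
lemma tendsto_diag (c : E ≃L[ℝ] (ι → ℝ)) :
    Tendsto (fun t : ℝ => c.symm (fun _ => t)) (𝓝[>] 0) (𝓝 0) := by
  have h : Continuous (fun t : ℝ => c.symm (fun _ => t)) := by fun_prop
  have := (h.tendsto 0).mono_left (nhdsWithin_le_nhds (s := Set.Ioi 0))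
  rwa [show c.symm (fun _ => (0 : ℝ)) = 0 from map_zero c.symm] at this

lemma NC.not_eventually_zero {c : E ≃L[ℝ] (ι → ℝ)} {f : E → ℝ} (hf : NC c f) :
    ¬ f =ᶠ[𝓝 0] 0 := by
  obtain ⟨α, u, hu, h0, hfu⟩ := hf
  intro hz
  have := ((hfu.and hz).and (hu.continuousAt.eventually_ne h0))
  obtain ⟨t, ⟨⟨h1, h2⟩, h3⟩, ht⟩ := (((tendsto_diag c).eventually this).and
    (self_mem_nhdsWithin)).exists
  rw [h2] at h1
  simp [Loj.mon, h3, Finset.prod_eq_zero_iff] at h1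
  have ht' : (0 : ℝ) < t := ht
  exact ht'.ne' h1.1

/-- Induction on the degree of the monomial: a coordinate dividing the product `f * g` divides one
of the two factors, because analytic germs on the coordinate hyperplane form an integral domain, and
it is cancelled by Hadamard division. -/
lemma NC.factor_aux (c : E ≃L[ℝ] (ι → ℝ)) (n : ℕ) : ∀ (α : ι → ℕ) (f g u : E → ℝ), ∑ i, α i = n →
    AnalyticAt ℝ f 0 → AnalyticAt ℝ g 0 → AnalyticAt ℝ u 0 → u 0 ≠ 0 →
    (∀ᶠ x in 𝓝 0, f x * g x = Loj.mon c α x * u x) → NC c f := by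
  classical
  induction n with
  | zero =>
    intro α f g u hα hf hg hu hu0 h
    have : α = 0 := by
      ext i; simpa using (Finset.sum_eq_zero_iff.1 hα) i
    subst this
    have h0 := h.self_of_nhds
    rw [mon_zero, one_mul] at h0
    refine NC.of_ne_zero c hf ?_
    intro hf0
    rw [hf0, zero_mul] at h0
    exact hu0 h0.symm
  | succ n ih =>
    intro α f g u hα hf hg hu hu0 h
    obtain ⟨j, hj⟩ : ∃ j, α j ≠ 0 := by
      by_contra! hc
      simp [hc] at hα
    obtain ⟨α', rfl⟩ : ∃ α' : ι → ℕ, α = Pi.single j 1 + α' := by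
      refine ⟨α - Pi.single j 1, ?_⟩
      ext i
      by_cases hi : i = j
      · subst hi; simp; omega
      · simp [hi]
    have hα' : ∑ i, α' i = n := by
      simp [Finset.sum_add_distrib] at hα; omega
    set e : E := c.symm (Pi.single j 1) with he
    set ℓ : E →L[ℝ] ℝ := (ContinuousLinearMap.proj (R := ℝ) (φ := fun _ : ι => ℝ) j).comp
      (c : E →L[ℝ] (ι → ℝ)) with hℓ
    have hℓa : ∀ x, ℓ x = c x j := fun x => rfl
    set π : E →L[ℝ] E := ContinuousLinearMap.id ℝ E - ℓ.smulRight e with hπ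
    have hdec : ∀ x, π x + ℓ x • e = x := by intro x; simp [hπ]
    have hπ0 : π 0 = 0 := map_zero _
    have hπj : ∀ x, c (π x) j = 0 := by
      intro x; simp [hπ, he, hℓa]
    have hπt : Tendsto π (𝓝 0) (𝓝 0) := by simpa using π.continuous.tendsto 0
    have hprod : ∀ᶠ x in 𝓝 0, f (π x) * g (π x) = 0 := by
      filter_upwards [hπt.eventually h] with x hx
      rw [hx, mon_add, mon_single, hπj]; simp
    have hℓan : AnalyticAt ℝ (fun x => c x j) 0 := analyticAt_coord c j 0
    have hℓz : ¬ (fun x => c x j) =ᶠ[𝓝 0] 0 := (NC.coord c j).not_eventually_zero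
    have hman := analyticAt_mon c α' 0
    rcases mul_eventually_zero (f := fun x => f (π x)) (g := fun x => g (π x))
      (AnalyticAt.fun_comp (hπ0.symm ▸ hf) (π.analyticAt 0))
      (AnalyticAt.fun_comp (hπ0.symm ▸ hg) (π.analyticAt 0)) hprod with hz | hz
    · obtain ⟨f1, hf1, hd⟩ := exists_div hf π ℓ e hdec
      have hf' : ∀ᶠ x in 𝓝 0, f x = c x j * f1 x := by
        filter_upwards [hd, hz] with x h1 h2
        rw [h1, h2, hℓa]; simp
      have := mul_eventually_zero (f := fun x => c x j)
        (g := fun x => f1 x * g x - Loj.mon c α' x * u x) hℓan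
        ((hf1.mul hg).sub (hman.mul hu)) (by
          filter_upwards [hf', h] with x h1 h2
          rw [h1, mon_add, mon_single] at h2
          linear_combination h2)
      have h1 := ih α' f1 g u hα' hf1 hg hu hu0
        ((this.resolve_left hℓz).mono fun x hx => sub_eq_zero.1 hx)
      exact ((NC.coord c j).mul h1).congr (hf'.mono fun x hx => hx.symm)
    · obtain ⟨g1, hg1, hd⟩ := exists_div hg π ℓ e hdec
      have hg' : ∀ᶠ x in 𝓝 0, g x = c x j * g1 x := by
        filter_upwards [hd, hz] with x h1 h2
        rw [h1, h2, hℓa]; simp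
      have := mul_eventually_zero (f := fun x => c x j)
        (g := fun x => f x * g1 x - Loj.mon c α' x * u x) hℓan
        ((hf.mul hg1).sub (hman.mul hu)) (by
          filter_upwards [hg', h] with x h1 h2
          rw [h1, mon_add, mon_single] at h2
          linear_combination h2)
      exact ih α' f g1 u hα' hf hg1 hu hu0
        ((this.resolve_left hℓz).mono fun x hx => sub_eq_zero.1 hx)

/-- An analytic factor of a germ with normal crossings has normal crossings. -/
lemma NC.factor {c : E ≃L[ℝ] (ι → ℝ)} {f g : E → ℝ} (hf : AnalyticAt ℝ f 0)
    (hg : AnalyticAt ℝ g 0) (h : NC c (fun x => f x * g x)) : NC c f := by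
  obtain ⟨α, u, hu, hu0, hfu⟩ := h
  exact NC.factor_aux c _ α f g u rfl hf hg hu hu0 hfu

lemma NC.factor_prod {c : E ≃L[ℝ] (ι → ℝ)} {K : Type*} (s : Finset K) {f : K → E → ℝ}
    (hf : ∀ k ∈ s, AnalyticAt ℝ (f k) 0) (h : NC c (fun x => ∏ k ∈ s, f k x)) :
    ∀ k ∈ s, NC c (f k) := by
  classical
  intro k hk
  refine NC.factor (g := fun x => ∏ i ∈ s.erase k, f i x) (hf k hk)
    (Finset.analyticAt_fun_prod _ fun i hi => hf i (Finset.mem_of_mem_erase hi)) ?_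
  refine h.congr (Eventually.of_forall fun x => ?_)
  exact (Finset.mul_prod_erase s (fun i => f i x) hk).symm

lemma prod_not_eventually_zero {K : Type*} (s : Finset K) {f : K → E → ℝ}
    (hf : ∀ k ∈ s, AnalyticAt ℝ (f k) 0) (h : ∀ k ∈ s, ¬ f k =ᶠ[𝓝 0] 0) :
    ¬ (fun x => ∏ k ∈ s, f k x) =ᶠ[𝓝 0] 0 := by
  classical
  induction s using Finset.induction_on with
  | empty =>
    intro h
    have := h.self_of_nhds
    simp at this
  | insert a s ha ih =>
    simp only [Finset.prod_insert ha]
    intro h'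
    rcases mul_eventually_zero (hf a (by simp))
      (Finset.analyticAt_fun_prod _ fun i hi => hf i (by simp [hi])) h' with h1 | h1
    · exact h a (by simp) h1
    · exact ih (fun k hk => hf k (by simp [hk])) (fun k hk => h k (by simp [hk])) h1

end NC

/-! ### Comparability of exponents -/

section Divis

variable {ι : Type} [Fintype ι]
variable {E : Type*} [NormedAddCommGroup E] [NormedSpace ℝ E]

/-- If some exponent of `y ^ α` exceeds that of `y ^ β`, letting the corresponding coordinate tend
to `0` makes `y ^ α * V y` the smaller one somewhere in the open positive orthant. -/
lemma exists_prod_lt {r : ℝ} (hr : 0 < r) (V W : (ι → ℝ) → ℝ)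
    (hV : ∀ y, ‖y‖ < r → ContinuousAt V y) (hW : ∀ y, ‖y‖ < r → ContinuousAt W y)
    (hW0 : ∀ y, ‖y‖ < r → 0 < W y) (α β : ι → ℕ) (j : ι) (hj : β j < α j) :
    ∃ y ∈ Set.univ.pi (fun _ : ι => Set.Ioo 0 r),
      (∏ i, y i ^ α i) * V y < (∏ i, y i ^ β i) * W y := by
  classical
  set Y : ℝ → ι → ℝ := fun t => Function.update (fun _ => r / 2) j t with hY
  have hYc : Continuous Y := continuous_const.update j continuous_id
  have hY0 : ‖Y 0‖ < r := by
    rw [pi_norm_lt_iff hr]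
    intro i
    by_cases hi : i = j
    · subst hi; simpa [hY] using hr
    · simp [hY, hi, abs_of_pos hr]; linarith
  have hprod : ∀ (γ : ι → ℕ) t, ∏ i, Y t i ^ γ i =
      t ^ γ j * ∏ i ∈ Finset.univ.erase j, (r / 2) ^ γ i := by
    intro γ t
    rw [← Finset.mul_prod_erase _ _ (Finset.mem_univ j)]
    congr 1
    · simp [hY]
    · refine Finset.prod_congr rfl fun i hi => ?_
      simp [hY, Finset.ne_of_mem_erase hi]
  set A := ∏ i ∈ Finset.univ.erase j, (r / 2) ^ α i
  set B := ∏ i ∈ Finset.univ.erase j, (r / 2) ^ β i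
  have hB : 0 < B := Finset.prod_pos fun i _ => by positivity
  have hcont : ContinuousAt (fun t => t ^ (α j - β j) * A * V (Y t) - B * W (Y t)) 0 := by
    have h1 : ContinuousAt (fun t => V (Y t)) 0 :=
      ContinuousAt.comp (hV _ hY0) hYc.continuousAt
    have h2 : ContinuousAt (fun t => W (Y t)) 0 :=
      ContinuousAt.comp (hW _ hY0) hYc.continuousAt
    fun_prop
  have hneg : (fun t => t ^ (α j - β j) * A * V (Y t) - B * W (Y t)) 0 < 0 := by
    have : α j - β j ≠ 0 := by omega
    simp [this]
    exact mul_pos hB (hW0 _ hY0)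
  have hev : ∀ᶠ t in 𝓝[>] (0 : ℝ), t ^ (α j - β j) * A * V (Y t) - B * W (Y t) < 0 :=
    (hcont.eventually_lt_const hneg).filter_mono nhdsWithin_le_nhds
  obtain ⟨t, ht1, ht2⟩ := (hev.and (Ioo_mem_nhdsGT hr)).exists
  refine ⟨Y t, ?_, ?_⟩
  · intro i _
    by_cases hi : i = j
    · subst hi; simpa [hY] using ht2
    · simp [hY, hi]; linarith
  · rw [hprod, hprod]
    have e : t ^ α j = t ^ β j * t ^ (α j - β j) := by rw [← pow_add]; congr 1; omega
    have h3 : 0 < t ^ β j := pow_pos ht2.1 _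
    have := mul_neg_of_pos_of_neg h3 ht1
    rw [e]
    linarith

/-- Two monomials times positive units whose difference is zero or has normal crossings have
comparable exponents. Otherwise each would be the smaller one somewhere in the open positive orthant,
so by the intermediate value theorem they would agree somewhere there, where a monomial times a unit
cannot vanish. -/
lemma exponents_comparable {c : E ≃L[ℝ] (ι → ℝ)} {v w : E → ℝ} {α β : ι → ℕ}
    (hv : AnalyticAt ℝ v 0) (hw : AnalyticAt ℝ w 0) (hv0 : 0 < v 0) (hw0 : 0 < w 0)
    (h : NC c (fun x => mon c α x * v x - mon c β x * w x) ∨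
      (fun x => mon c α x * v x - mon c β x * w x) =ᶠ[𝓝 0] 0) : α ≤ β ∨ β ≤ α := by
  by_contra hcon
  push Not at hcon
  obtain ⟨h1, h2⟩ := hcon
  simp only [Pi.le_def, not_forall, not_le] at h1 h2
  obtain ⟨j, hj⟩ := h1
  obtain ⟨k, hk⟩ := h2
  have key : ∀ᶠ x in 𝓝 (0 : E), ContinuousAt v x ∧ ContinuousAt w x ∧ 0 < v x ∧ 0 < w x := by
    filter_upwards [hv.eventually_analyticAt, hw.eventually_analyticAt,
      hv.continuousAt.eventually_const_lt hv0, hw.continuousAt.eventually_const_lt hw0]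
      with x a1 a2 a3 a4
    exact ⟨a1.continuousAt, a2.continuousAt, a3, a4⟩
  have key2 : (∀ᶠ x in 𝓝 (0 : E), ((∀ i, c x i ≠ 0) → mon c α x * v x ≠ mon c β x * w x)) ∨
      (∀ᶠ x in 𝓝 (0 : E), mon c α x * v x = mon c β x * w x) := by
    rcases h with ⟨δ, u, hu, hu0, hd⟩ | h
    · left
      filter_upwards [hd, hu.continuousAt.eventually_ne hu0] with x h1 h2 h3 h4
      rw [h4, sub_self] at h1
      exact (mul_ne_zero (Finset.prod_ne_zero_iff.2 fun i _ => pow_ne_zero _ (h3 i)) h2) h1.symm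
    · right
      filter_upwards [h] with x hx using sub_eq_zero.1 hx
  have ct : Tendsto c.symm (𝓝 (0 : ι → ℝ)) (𝓝 0) := by
    simpa using c.symm.continuous.tendsto 0
  have main : ∀ P : E → Prop, (∀ᶠ x in 𝓝 (0 : E), P x) → ∃ r > 0, ∀ y : ι → ℝ, ‖y‖ < r →
      P (c.symm y) ∧ ContinuousAt v (c.symm y) ∧ ContinuousAt w (c.symm y) ∧
        0 < v (c.symm y) ∧ 0 < w (c.symm y) := by
    intro P hP
    obtain ⟨r, hr, hb⟩ := Metric.eventually_nhds_iff_ball.1 (ct.eventually (hP.and key))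
    refine ⟨r, hr, fun y hy => ?_⟩
    exact hb y (by simpa using hy)
  have mm : ∀ (γ : ι → ℕ) y, mon c γ (c.symm y) = ∏ i, y i ^ γ i := by
    intro γ y; simp [mon]
  have cs : ∀ (f : E → ℝ) y, ContinuousAt f (c.symm y) → ContinuousAt (fun y => f (c.symm y)) y :=
    fun f y hf => ContinuousAt.comp hf c.symm.continuous.continuousAt
  have nrm : ∀ {r : ℝ}, 0 < r → ∀ y ∈ Set.univ.pi (fun _ : ι => Set.Ioo 0 r), ‖y‖ < r := by
    intro r hr y hy
    rw [pi_norm_lt_iff hr]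
    intro i
    have := hy i (Set.mem_univ i)
    rw [Real.norm_eq_abs, abs_of_pos this.1]; exact this.2
  rcases key2 with hne | heq
  · obtain ⟨r, hr, hb⟩ := main _ hne
    obtain ⟨y1, hy1, hlt1⟩ := exists_prod_lt hr (fun y => v (c.symm y)) (fun y => w (c.symm y))
      (fun y hy => cs _ _ (hb y hy).2.1) (fun y hy => cs _ _ (hb y hy).2.2.1)
      (fun y hy => (hb y hy).2.2.2.2) α β j hj
    obtain ⟨y2, hy2, hlt2⟩ := exists_prod_lt hr (fun y => w (c.symm y)) (fun y => v (c.symm y))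
      (fun y hy => cs _ _ (hb y hy).2.2.1) (fun y hy => cs _ _ (hb y hy).2.1)
      (fun y hy => (hb y hy).2.2.2.1) β α k hk
    have hconn : IsPreconnected (Set.univ.pi (fun _ : ι => Set.Ioo (0 : ℝ) r)) :=
      (convex_pi fun i _ => convex_Ioo 0 r).isPreconnected
    have cont : ∀ (γ : ι → ℕ) (f : E → ℝ), (∀ y : ι → ℝ, ‖y‖ < r → ContinuousAt f (c.symm y)) →
        ContinuousOn (fun y : ι → ℝ => (∏ i, y i ^ γ i) * f (c.symm y))
          (Set.univ.pi (fun _ : ι => Set.Ioo (0 : ℝ) r)) := by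
      intro γ f hf y hy
      have := cs f y (hf y (nrm hr y hy))
      refine ContinuousAt.continuousWithinAt (ContinuousAt.mul ?_ this)
      exact (continuous_finsetProd _ fun i _ => (continuous_apply i).pow _).continuousAt
    obtain ⟨y, hy, hyeq⟩ := hconn.intermediate_value₂ hy1 hy2
      (cont α v fun y hy => (hb y hy).2.1) (cont β w fun y hy => (hb y hy).2.2.1) hlt1.le hlt2.le
    refine (hb y (nrm hr y hy)).1 (fun i => ?_) ?_
    · simpa using (hy i (Set.mem_univ i)).1.ne'
    · rw [mm, mm]; exact hyeq
  · obtain ⟨r, hr, hb⟩ := main _ heq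
    obtain ⟨y1, hy1, hlt1⟩ := exists_prod_lt hr (fun y => v (c.symm y)) (fun y => w (c.symm y))
      (fun y hy => cs _ _ (hb y hy).2.1) (fun y hy => cs _ _ (hb y hy).2.2.1)
      (fun y hy => (hb y hy).2.2.2.2) α β j hj
    have := (hb y1 (nrm hr y1 hy1)).1
    rw [mm, mm] at this
    exact hlt1.ne this

end Divis

/-! ### Derivatives and Taylor expansion in the last variable -/

section Taylor

variable {E : Type*} [NormedAddCommGroup E] [NormedSpace ℝ E]

/-- Partial derivative in the last variable; by the convention for `deriv` it is `0` where `F` is not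
differentiable in that variable. -/
noncomputable def D (F : E × ℝ → ℝ) : E × ℝ → ℝ := fun p => deriv (fun t => F (p.1, t)) p.2

lemma tendsto_slice (q : E × ℝ) : Tendsto (fun t : ℝ => (q.1, t)) (𝓝 q.2) (𝓝 q) := by
  have : Continuous (fun t : ℝ => (q.1, t)) := by fun_prop
  exact this.tendsto q.2

lemma D_congr {F G : E × ℝ → ℝ} {p : E × ℝ} (h : F =ᶠ[𝓝 p] G) : D F =ᶠ[𝓝 p] D G := by
  filter_upwards [h.eventuallyEq_nhds] with q hq
  exact EventuallyEq.deriv_eq ((tendsto_slice q).eventually hq)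

lemma D_iter_congr {F G : E × ℝ → ℝ} {p : E × ℝ} (h : F =ᶠ[𝓝 p] G) (k : ℕ) :
    D^[k] F =ᶠ[𝓝 p] D^[k] G := by
  induction k with
  | zero => simpa
  | succ k ih => rw [Function.iterate_succ_apply', Function.iterate_succ_apply']; exact D_congr ih

lemma hasDerivAt_slice {F : E × ℝ → ℝ} {q : E × ℝ} (h : AnalyticAt ℝ F q) :
    HasDerivAt (fun t => F (q.1, t)) (fderiv ℝ F q (0, 1)) q.2 := by
  have h1 : HasFDerivAt F (fderiv ℝ F q) (q.1, q.2) := h.differentiableAt.hasFDerivAt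
  exact h1.comp_hasDerivAt q.2 ((hasDerivAt_const q.2 q.1).prodMk (hasDerivAt_id q.2))

lemma D_eq_fderiv {F : E × ℝ → ℝ} {p : E × ℝ} (h : AnalyticAt ℝ F p) :
    D F p = fderiv ℝ F p (0, 1) := (hasDerivAt_slice h).deriv

lemma D_analyticAt {F : E × ℝ → ℝ} {p : E × ℝ} (h : AnalyticAt ℝ F p) : AnalyticAt ℝ (D F) p := by
  have h1 : AnalyticAt ℝ (fun q => fderiv ℝ F q (0, 1)) p :=
    ((ContinuousLinearMap.apply ℝ ℝ ((0, 1) : E × ℝ)).analyticAt _).comp h.fderiv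
  refine h1.congr ?_
  filter_upwards [h.eventually_analyticAt] with q hq using (D_eq_fderiv hq).symm

lemma D_iter_analyticAt {F : E × ℝ → ℝ} {p : E × ℝ} (h : AnalyticAt ℝ F p) (k : ℕ) :
    AnalyticAt ℝ (D^[k] F) p := by
  induction k with
  | zero => simpa
  | succ k ih => rw [Function.iterate_succ_apply']; exact D_analyticAt ih

lemma D_iter_shift (F : E × ℝ → ℝ) (h : E → ℝ) (k : ℕ) (p : E × ℝ) :
    D^[k] (fun q => F (q.1, h q.1 + q.2)) p = D^[k] F (p.1, h p.1 + p.2) := by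
  induction k generalizing p with
  | zero => rfl
  | succ k ih =>
    rw [Function.iterate_succ_apply', Function.iterate_succ_apply']
    have : D^[k] (fun q => F (q.1, h q.1 + q.2)) = fun q => D^[k] F (q.1, h q.1 + q.2) :=
      funext ih
    rw [this]
    exact deriv_comp_const_add (f := fun t => D^[k] F (p.1, t)) (h p.1) p.2

lemma D_iter_eq_iteratedDeriv (F : E × ℝ → ℝ) (k : ℕ) (p : E × ℝ) :
    D^[k] F p = iteratedDeriv k (fun t => F (p.1, t)) p.2 := by
  induction k generalizing p with
  | zero => rfl
  | succ k ih =>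
    rw [Function.iterate_succ_apply', iteratedDeriv_succ]
    have : D^[k] F = fun q => iteratedDeriv k (fun t => F (q.1, t)) q.2 := funext ih
    rw [this]
    rfl

lemma D_snd_mul {G : E × ℝ → ℝ} {p : E × ℝ} (h : AnalyticAt ℝ G p) :
    D (fun q => q.2 * G q) p = G p + p.2 * D G p := by
  have h1 := (hasDerivAt_id p.2).mul (hasDerivAt_slice h)
  rw [D_eq_fderiv h]
  refine h1.deriv.trans ?_
  simp

lemma D_iter_snd_mul {G : E × ℝ → ℝ} (h : AnalyticAt ℝ G 0) (k : ℕ) :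
    D^[k + 1] (fun q => q.2 * G q) =ᶠ[𝓝 0]
      fun q => (k + 1) * D^[k] G q + q.2 * D^[k + 1] G q := by
  induction k with
  | zero =>
    filter_upwards [h.eventually_analyticAt] with q hq
    simpa using D_snd_mul hq
  | succ k ih =>
    rw [Function.iterate_succ_apply']
    refine (D_congr ih).trans ?_
    filter_upwards [h.eventually_analyticAt] with q hq
    have h1 := (D_iter_analyticAt hq k)
    have h2 := (D_iter_analyticAt hq (k + 1))
    have e1 := (hasDerivAt_slice h1).const_mul ((k : ℝ) + 1)
    have e2 := (hasDerivAt_id q.2).mul (hasDerivAt_slice h2)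
    have e3 := (e1.add e2).deriv
    rw [← D_eq_fderiv h1, ← D_eq_fderiv h2] at e3
    refine e3.trans ?_
    rw [Function.iterate_succ_apply' D (k + 1), Function.iterate_succ_apply' D k]
    push_cast
    simp only [id]
    ring

lemma D_iter_const_add (c : E → ℝ) (G : E × ℝ → ℝ) (k : ℕ) :
    D^[k + 1] (fun q => c q.1 + G q) = D^[k + 1] G := by
  rw [Function.iterate_succ_apply, Function.iterate_succ_apply]
  congr 1
  ext p
  simp [D]

lemma tendsto_left : Tendsto (fun y : E => (y, (0 : ℝ))) (𝓝 0) (𝓝 0) := by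
  have : Continuous (fun y : E => (y, (0 : ℝ))) := by fun_prop
  exact this.tendsto 0

lemma analyticAt_left {F : E × ℝ → ℝ} (h : AnalyticAt ℝ F 0) :
    AnalyticAt ℝ (fun y => F (y, 0)) 0 :=
  AnalyticAt.fun_comp (g := F) (f := fun y : E => (y, (0 : ℝ))) h (by fun_prop)

/-- Taylor expansion to order `d` in the last variable, with analytic coefficients and remainder,
obtained by iterating Hadamard division. -/
lemma exists_taylor (d : ℕ) : ∀ {F : E × ℝ → ℝ}, AnalyticAt ℝ F 0 →
    ∃ (c : ℕ → E → ℝ) (u : E × ℝ → ℝ), (∀ i, AnalyticAt ℝ (c i) 0) ∧ AnalyticAt ℝ u 0 ∧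
      (∀ᶠ p in 𝓝 (0 : E × ℝ), F p = ∑ i ∈ Finset.range d, c i p.1 * p.2 ^ i + p.2 ^ d * u p) ∧
      (∀ i < d, ∀ᶠ y in 𝓝 (0 : E), D^[i] F (y, 0) = i.factorial * c i y) ∧
      (∀ᶠ y in 𝓝 (0 : E), D^[d] F (y, 0) = d.factorial * u (y, 0)) := by
  induction d with
  | zero =>
    intro F hF
    refine ⟨fun _ _ => 0, F, fun _ => analyticAt_const, hF, ?_, ?_, ?_⟩ <;> simp
  | succ d ih =>
    intro F hF
    obtain ⟨G, hG, hdiv⟩ := exists_div hF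
      ((ContinuousLinearMap.inl ℝ E ℝ).comp (ContinuousLinearMap.fst ℝ E ℝ))
      (ContinuousLinearMap.snd ℝ E ℝ) (0, 1) (by rintro ⟨y, s⟩; simp)
    obtain ⟨c, u, hc, hu, h1, h2, h3⟩ := ih hG
    have hdiv' : F =ᶠ[𝓝 0] fun q => F (q.1, 0) + q.2 * G q := by
      filter_upwards [hdiv] with q hq
      simpa using hq
    have hD : ∀ k, ∀ᶠ y in 𝓝 (0 : E), D^[k + 1] F (y, 0) = (k + 1) * D^[k] G (y, 0) := by
      intro k
      have e := (D_iter_congr hdiv' (k + 1))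
      rw [D_iter_const_add (fun y => F (y, 0)) (fun q => q.2 * G q)] at e
      filter_upwards [tendsto_left.eventually (e.trans (D_iter_snd_mul hG k))] with y hy
      simpa using hy
    refine ⟨fun i => Nat.casesOn i (fun y => F (y, 0)) c, u, ?_, hu, ?_, ?_, ?_⟩
    · rintro (_ | i)
      · exact analyticAt_left hF
      · exact hc i
    · filter_upwards [hdiv', h1] with q hq1 hq2
      rw [hq1, hq2, Finset.sum_range_succ']
      simp only [mul_add, Finset.mul_sum, pow_succ, pow_zero]
      have : ∀ x ∈ Finset.range d, q.2 * (c x q.1 * q.2 ^ x) = c x q.1 * (q.2 ^ x * q.2) :=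
        fun x _ => by ring
      rw [Finset.sum_congr rfl this]
      change _ = _ + F (q.1, 0) * 1 + _
      ring
    · rintro (_ | i) hi
      · simp
      · filter_upwards [hD i, h2 i (by omega)] with y hy1 hy2
        rw [hy1, hy2, Nat.factorial_succ]; push_cast; ring
    · filter_upwards [hD d, h3] with y hy1 hy2
      rw [hy1, hy2, Nat.factorial_succ]; push_cast; ring

/-- Analytic implicit function theorem for one scalar equation in the last variable. -/
lemma exists_implicit [CompleteSpace E] {G : E × ℝ → ℝ} (hG : AnalyticAt ℝ G 0) (h0 : G 0 = 0)
    (h1 : D G 0 ≠ 0) : ∃ h : E → ℝ, AnalyticAt ℝ h 0 ∧ h 0 = 0 ∧ ∀ᶠ y in 𝓝 0, G (y, h y) = 0 := by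
  have cd : ContDiffAt ℝ ⊤ G (0 : E × ℝ) := hG.contDiffAt
  have hinv : (fderiv ℝ G (0 : E × ℝ) ∘L .inr ℝ E ℝ).IsInvertible := by
    rw [D_eq_fderiv hG] at h1
    refine ⟨ContinuousLinearEquiv.unitsEquivAut ℝ (Units.mk0 _ h1), ?_⟩
    ext
    simp
  refine ⟨cd.implicitFunction (by simp) hinv, ?_, ?_, ?_⟩
  · exact (cd.contDiffAt_implicitFunction (by simp) hinv).analyticAt
  · exact cd.implicitFunction_apply_self (by simp) hinv
  · have := cd.eventually_apply_implicitFunction (by simp) hinv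
    rw [h0] at this
    exact this

end Taylor

/-! ### Lifting sequences along an ultrafilter -/

section Lift

variable {E F G : Type*} [NormedAddCommGroup E] [NormedSpace ℝ E]
  [NormedAddCommGroup F] [NormedSpace ℝ F] [NormedAddCommGroup G] [NormedSpace ℝ G]

/-- The germ at `0` of the analytic map `φ` fixes the origin, and along the ultrafilter `U` the
sequence `x` is the image under `φ` of a sequence `y` tending to `0`. Such a `φ` plays the role of
one chart of a resolution, namely a chart through which `x` passes. -/
def Lift (U : Ultrafilter ℕ) (φ : E → F) (y : ℕ → E) (x : ℕ → F) : Prop :=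
  AnalyticAt ℝ φ 0 ∧ φ 0 = 0 ∧ Tendsto y U (𝓝 0) ∧ ∀ᶠ n in U, φ (y n) = x n

lemma Lift.comp {U : Ultrafilter ℕ} {φ : F → G} {ψ : E → F} {x : ℕ → G} {y : ℕ → F} {z : ℕ → E}
    (h : Lift U φ y x) (h' : Lift U ψ z y) : Lift U (fun p => φ (ψ p)) z x := by
  refine ⟨AnalyticAt.fun_comp (h'.2.1.symm ▸ h.1) h'.1, by simp only [h'.2.1, h.2.1], h'.2.2.1, ?_⟩
  filter_upwards [h.2.2.2, h'.2.2.2] with n h1 h2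
  rw [h2, h1]

lemma Lift.tendsto {U : Ultrafilter ℕ} {φ : E → F} {y : ℕ → E} {x : ℕ → F} (h : Lift U φ y x) :
    Tendsto φ (𝓝 0) (𝓝 0) := tendsto_zero_of_analyticAt h.1 h.2.1

lemma Lift.analyticAt_comp {U : Ultrafilter ℕ} {φ : E → F} {y : ℕ → E} {x : ℕ → F}
    (h : Lift U φ y x) {f : F → G} (hf : AnalyticAt ℝ f 0) : AnalyticAt ℝ (fun p => f (φ p)) 0 :=
  AnalyticAt.fun_comp (h.2.1.symm ▸ hf) h.1

lemma Lift.snd_comp {U : Ultrafilter ℕ} {φ : E → F} {y : ℕ → E} {x : ℕ → F × ℝ}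
    (h : Lift U φ y (fun n => (x n).1)) (hx : Tendsto x U (𝓝 0)) :
    Lift U (fun p : E × ℝ => (φ p.1, p.2)) (fun n => (y n, (x n).2)) x := by
  refine ⟨?_, ?_, ?_, ?_⟩
  · exact (AnalyticAt.fun_comp (g := φ) (f := Prod.fst) h.1 analyticAt_fst).prod analyticAt_snd
  · ext <;> simp [h.2.1]
  · exact h.2.2.1.prodMk_nhds ((continuous_snd.tendsto (0 : F × ℝ)).comp hx)
  · filter_upwards [h.2.2.2] with n hn
    simp [hn]

/-- Along an ultrafilter every bounded real sequence converges. -/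
lemma exists_tendsto_of_bounded {U : Ultrafilter ℕ} {t : ℕ → ℝ} {C : ℝ}
    (h : ∀ᶠ n in U, |t n| ≤ C) : ∃ t₀, Tendsto t U (𝓝 t₀) := by
  obtain ⟨t₀, -, h⟩ := (isCompact_Icc (a := -C) (b := C)).ultrafilter_le_nhds (U.map t)
    (by
      rw [Ultrafilter.coe_map, le_principal_iff, mem_map]
      filter_upwards [h] with n hn using abs_le.1 hn)
  exact ⟨t₀, h⟩

end Lift

/-! ### Blow-ups comparing a variable with a monomial -/

section Toric

variable {ι : Type} [Fintype ι]

/-- The standard coordinates on `(ι → ℝ) × ℝ`, indexed by `Option ι`, with `none` for the last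
variable. -/
noncomputable def pc (ι : Type) [Fintype ι] : ((ι → ℝ) × ℝ) ≃L[ℝ] (Option ι → ℝ) :=
  LinearEquiv.toContinuousLinearEquiv
    { toFun := fun p o => o.elim p.2 p.1
      invFun := fun f => (fun i => f (some i), f none)
      map_add' := fun p q => by ext (_ | i) <;> simp
      map_smul' := fun r p => by ext (_ | i) <;> simp
      left_inv := fun p => by simp
      right_inv := fun f => by ext (_ | i) <;> simp }

@[simp] lemma pc_none (p : (ι → ℝ) × ℝ) : pc ι p none = p.2 := rfl
@[simp] lemma pc_some (p : (ι → ℝ) × ℝ) (i : ι) : pc ι p (some i) = p.1 i := rfl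

/-- The standard coordinates on `ι → ℝ`. -/
noncomputable abbrev idc (ι : Type) : (ι → ℝ) ≃L[ℝ] (ι → ℝ) := ContinuousLinearEquiv.refl ℝ (ι → ℝ)

lemma NC.pull_fst {f : (ι → ℝ) → ℝ} (hf : NC (idc ι) f) : NC (pc ι) (fun p => f p.1) :=
  hf.comp (φ := Prod.fst) analyticAt_fst rfl fun i => NC.coord (pc ι) (some i)

/-- If along `x` the last variable `s` dominates every multiple of the monomial `y ^ γ`, then after
blow-ups the pullback of `y ^ γ` is divisible by that of `s`. Induction on `|γ|`: pick a variable `y_j`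
occurring in `y ^ γ`. If `y_j / s` stays bounded, the chart `y_j = s * (t₀ + y_j')` makes `y_j`
divisible by `s`; otherwise `s / y_j → 0`, and the chart `s = y_j * s'` reduces the claim to the
monomial `y ^ γ / y_j`. -/
lemma toric (U : Ultrafilter ℕ) (N : ℕ) : ∀ (γ : ι → ℕ), ∑ i, γ i = N →
    ∀ (x : ℕ → (ι → ℝ) × ℝ), Tendsto x U (𝓝 0) →
    (∀ C : ℝ, ∀ᶠ n in U, C * |mon (idc ι) γ (x n).1| < |(x n).2|) →
    ∃ (φ : (ι → ℝ) × ℝ → (ι → ℝ) × ℝ) (y : ℕ → (ι → ℝ) × ℝ) (W : (ι → ℝ) × ℝ → ℝ),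
      Lift U φ y x ∧ (∀ o, NC (pc ι) (fun p => pc ι (φ p) o)) ∧ AnalyticAt ℝ W 0 ∧
      ∀ᶠ p in 𝓝 0, mon (idc ι) γ (φ p).1 = (φ p).2 * W p := by
  classical
  have hfst : ∀ x : ℕ → (ι → ℝ) × ℝ, Tendsto x U (𝓝 0) → Tendsto (fun n => (x n).1) U (𝓝 0) :=
    fun x hx => (continuous_fst.tendsto (0 : (ι → ℝ) × ℝ)).comp hx
  have hsnd : ∀ x : ℕ → (ι → ℝ) × ℝ, Tendsto x U (𝓝 0) → Tendsto (fun n => (x n).2) U (𝓝 0) :=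
    fun x hx => (continuous_snd.tendsto (0 : (ι → ℝ) × ℝ)).comp hx
  induction N with
  | zero =>
    intro γ hγ x hx h
    exfalso
    have hγ0 : γ = 0 := by
      funext i
      simpa using Finset.sum_eq_zero_iff.1 hγ i (Finset.mem_univ i)
    have h1 := (hsnd x hx).abs
    rw [abs_zero] at h1
    obtain ⟨n, hn1, hn2⟩ := ((h 1).and (h1.eventually (gt_mem_nhds one_pos))).exists
    rw [hγ0, mon_zero] at hn1
    simp at hn1
    linarith
  | succ N ih =>
    intro γ hγ x hx h
    obtain ⟨j, hj⟩ : ∃ j, γ j ≠ 0 := by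
      by_contra! hcon
      simp [hcon] at hγ
    set γ' : ι → ℕ := γ - Pi.single j 1 with hγ'
    have hγe : γ = Pi.single j 1 + γ' := by
      funext i
      rcases eq_or_ne i j with rfl | hne
      · simp [hγ']; omega
      · simp [hγ', hne]
    have hsum : ∑ i, γ' i = N := by
      rw [hγe] at hγ
      simp [Finset.sum_add_distrib] at hγ
      omega
    have hm : ∀ z : ι → ℝ, mon (idc ι) γ z = z j * mon (idc ι) γ' z := by
      intro z
      rw [hγe, mon_add, mon_single]
      rfl
    have hs0 : ∀ᶠ n in U, (x n).2 ≠ 0 := by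
      filter_upwards [h 0] with n hn
      simpa using hn
    have hup : ∀ t₀ : ℝ, AnalyticAt ℝ (fun p : (ι → ℝ) × ℝ =>
        (fun i => if i = j then p.2 * (t₀ + p.1 j) else p.1 i)) 0 := by
      intro t₀
      rw [analyticAt_pi_iff]
      intro i
      by_cases hi : i = j
      · simp only [hi, if_true]
        exact (analyticAt_coord (pc ι) none 0).mul
          (analyticAt_const.add (analyticAt_coord (pc ι) (some j) 0))
      · simp only [hi, if_false]
        exact analyticAt_coord (pc ι) (some i) 0
    by_cases hcase : ∃ C : ℝ, ∀ᶠ n in U, |(x n).1 j| ≤ C * |(x n).2|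
    · obtain ⟨C, hC⟩ := hcase
      obtain ⟨t₀, ht₀⟩ := exists_tendsto_of_bounded (U := U) (t := fun n => (x n).1 j / (x n).2)
        (C := C) (by
          filter_upwards [hC, hs0] with n h1 h2
          rw [abs_div, div_le_iff₀ (abs_pos.2 h2)]; exact h1)
      refine ⟨fun p => (fun i => if i = j then p.2 * (t₀ + p.1 j) else p.1 i, p.2),
        fun n => (fun i => if i = j then (x n).1 j / (x n).2 - t₀ else (x n).1 i, (x n).2),
        fun p => (t₀ + p.1 j) *
          mon (idc ι) γ' (fun i => if i = j then p.2 * (t₀ + p.1 j) else p.1 i),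
        ⟨?_, ?_, ?_, ?_⟩, ?_, ?_, ?_⟩
      · exact (hup t₀).prod analyticAt_snd
      · ext i <;> simp
      · refine Tendsto.prodMk_nhds (tendsto_pi_nhds.2 fun i => ?_) (hsnd x hx)
        by_cases hi : i = j
        · simp only [hi, if_true]
          simpa using ht₀.sub_const t₀
        · simp only [hi, if_false]
          exact (tendsto_pi_nhds.1 (hfst x hx)) i
      · filter_upwards [hs0] with n hn
        refine Prod.ext (funext fun i => ?_) rfl
        by_cases hi : i = j
        · subst hi; simp; field_simp
        · simp [hi]
      · have hj' : NC (pc ι) (fun p => t₀ + p.1 j) := by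
          by_cases ht : t₀ = 0
          · refine (NC.coord (pc ι) (some j)).congr (Eventually.of_forall fun p => ?_)
            simp [ht]
          · refine NC.of_ne_zero _ (analyticAt_const.add (analyticAt_coord (pc ι) (some j) 0)) ?_
            simpa using ht
        rintro (_ | i)
        · exact NC.coord (pc ι) none
        · by_cases hi : i = j
          · simp only [pc_some, hi, if_true]
            exact (NC.coord (pc ι) none).mul hj'
          · simp only [pc_some, hi, if_false]
            exact NC.coord (pc ι) (some i)
      · exact (analyticAt_const.add (analyticAt_coord (pc ι) (some j) 0)).mul
          (AnalyticAt.fun_comp (analyticAt_mon (idc ι) γ' _) (hup t₀))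
      · refine Eventually.of_forall fun p => ?_
        simp only [hm]
        simp
        ring
    · push Not at hcase
      have hcase' : ∀ C : ℝ, ∀ᶠ n in U, C * |(x n).2| < |(x n).1 j| := by
        intro C
        exact hcase C
      have hy0 : ∀ᶠ n in U, (x n).1 j ≠ 0 := by
        filter_upwards [hcase' 0] with n hn
        simpa using hn
      have hxt : Tendsto (fun n => ((x n).1, (x n).2 / (x n).1 j)) U (𝓝 0) := by
          refine Tendsto.prodMk_nhds (hfst x hx) ?_
          rw [tendsto_zero_iff_abs_tendsto_zero]
          refine tendsto_order.2 ⟨fun a ha => Eventually.of_forall fun n =>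
            ha.trans_le (abs_nonneg _), fun a ha => ?_⟩
          filter_upwards [hcase' a⁻¹, hy0] with n h1 h2
          simp only [Function.comp, abs_div]
          rw [div_lt_iff₀ (abs_pos.2 h2)]
          rwa [inv_mul_lt_iff₀ ha] at h1
      obtain ⟨φ, y, W, hL, hN, hW, hE⟩ := ih γ' hsum (fun n => ((x n).1, (x n).2 / (x n).1 j)) hxt
        (by
          intro C
          filter_upwards [h C, hy0] with n h1 h2
          rw [hm, abs_mul] at h1
          rw [abs_div, lt_div_iff₀ (abs_pos.2 h2)]
          linarith)
      have hL0 : Lift U (fun p : (ι → ℝ) × ℝ => (p.1, p.1 j * p.2))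
          (fun n => ((x n).1, (x n).2 / (x n).1 j)) x := by
        refine ⟨?_, ?_, ?_, ?_⟩
        · exact analyticAt_fst.prod
            ((analyticAt_coord (pc ι) (some j) 0).mul (analyticAt_coord (pc ι) none 0))
        · simp
        · exact hxt
        · filter_upwards [hy0] with n hn
          refine Prod.ext rfl ?_
          field_simp
      refine ⟨_, y, W, hL0.comp hL, ?_, hW, ?_⟩
      · rintro (_ | i)
        · exact (hN (some j)).mul (hN none)
        · exact hN (some i)
      · filter_upwards [hE] with p hp
        rw [hm, hp]
        ring

end Toric

/-! ### Roots of Tschirnhausen polynomials -/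

section Poly
open Polynomial

lemma iteratedDeriv_eval (k : ℕ) (P : ℝ[X]) :
    iteratedDeriv k (fun t => P.eval t) = fun t => (derivative^[k] P).eval t := by
  induction k with
  | zero => simp
  | succ k ih =>
    rw [iteratedDeriv_succ, ih, Function.iterate_succ_apply']
    ext t
    exact Polynomial.deriv _

/-- A polynomial `∑ bᵢ Xⁱ + u X ^ d` of degree `d` with `b_{d-1} = 0` and another nonzero lower
coefficient has no root of multiplicity `d`: it would equal `u (X - z₀) ^ d`, whose coefficient of
order `d - 1` vanishes only for `z₀ = 0`. -/
lemma exists_iteratedDeriv_ne {d : ℕ} {b : ℕ → ℝ} {u z₀ : ℝ} (hu : u ≠ 0) (hb : b (d - 1) = 0)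
    {i₀ : ℕ} (hi : i₀ < d) (hi0 : b i₀ ≠ 0) :
    ∃ k < d, iteratedDeriv k
      (fun t => ∑ i ∈ Finset.range d, b i * (z₀ + t) ^ i + (z₀ + t) ^ d * u) 0 ≠ 0 := by
  by_contra! hcon
  set P : ℝ[X] := ∑ i ∈ Finset.range d, C (b i) * X ^ i + C u * X ^ d with hP
  have hcoef : ∀ i < d, P.coeff i = b i := by
    intro i hi
    simp [hP, coeff_X_pow, hi, hi.ne]
  have hcoefd : P.coeff d = u := by
    simp [hP, coeff_X_pow]
  have hP0 : P ≠ 0 := fun h => hu (by rw [← hcoefd, h, coeff_zero])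
  have hdeg : P.natDegree ≤ d := by
    refine natDegree_add_le_of_degree_le (natDegree_sum_le_of_forall_le _ _ fun i hi => ?_) ?_
    · exact (natDegree_C_mul_X_pow_le _ _).trans (Finset.mem_range.1 hi).le
    · exact natDegree_C_mul_X_pow_le _ _
  have hroot : ∀ m ≤ d - 1, (derivative^[m] P).IsRoot z₀ := by
    intro m hm
    have h1 := hcon m (by omega)
    have h2 : (fun t => ∑ i ∈ Finset.range d, b i * (z₀ + t) ^ i + (z₀ + t) ^ d * u) =
        fun t => (fun t => P.eval t) (z₀ + t) := by
      ext t
      simp only [hP, eval_add, eval_finsetSum, eval_mul, eval_C, eval_pow, eval_X]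
      ring
    rw [h2, congrFun (iteratedDeriv_comp_const_add m (fun t => P.eval t) z₀) 0,
      iteratedDeriv_eval] at h1
    simpa using h1
  have hmul : d ≤ P.rootMultiplicity z₀ := by
    have := lt_rootMultiplicity_of_isRoot_iterate_derivative hP0 hroot
    omega
  obtain ⟨S, hS⟩ := (le_rootMultiplicity_iff hP0).1 hmul
  have hS0 : S ≠ 0 := by rintro rfl; exact hP0 (by rw [hS, mul_zero])
  have hS1 : S.natDegree = 0 := by
    have := (monic_X_sub_C z₀).pow d |>.natDegree_mul' hS0
    rw [← hS, (monic_X_sub_C z₀).natDegree_pow, natDegree_X_sub_C] at this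
    omega
  obtain ⟨q, rfl⟩ := natDegree_eq_zero.1 hS1
  have hq : q ≠ 0 := by simpa using hS0
  have hc : ∀ k, P.coeff k = (-z₀) ^ (d - k) * (d.choose k : ℝ) * q := by
    intro k
    rw [hS, coeff_mul_C, sub_eq_add_neg, ← C_neg, coeff_X_add_C_pow]
  have h1 := hc (d - 1)
  rw [hcoef _ (by omega), hb, show d - (d - 1) = 1 by omega, pow_one] at h1
  have hz : z₀ = 0 := by
    have h3 : (d.choose (d - 1) : ℝ) ≠ 0 := by
      exact_mod_cast (Nat.choose_pos (Nat.sub_le _ _)).ne'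
    have := h1.symm
    simpa [h3, hq] using this
  have h2 := hc i₀
  rw [hcoef _ hi, hz, neg_zero, zero_pow (by omega)] at h2
  exact hi0 (by simpa using h2)

end Poly

/-! ### Power substitutions -/

section Power

variable {ι : Type} [Fintype ι]

/-- The substitution `x_i = ± t_i ^ N`, with the sign of `x_i` along the ultrafilter. -/
lemma exists_power_subst (U : Ultrafilter ℕ) {N : ℕ} (hN : N ≠ 0) {x : ℕ → ι → ℝ}
    (hx : Tendsto x U (𝓝 0)) :
    ∃ (ε : ι → ℝ) (y : ℕ → ι → ℝ), (∀ i, ε i ≠ 0) ∧ Lift U (fun t i => ε i * t i ^ N) y x := by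
  classical
  refine ⟨fun i => if ∀ᶠ n in U, 0 ≤ x n i then 1 else -1,
    fun n i => |x n i| ^ ((N : ℝ)⁻¹), fun i => ?_, ?_, ?_, ?_, ?_⟩
  · dsimp only
    split_ifs <;> norm_num
  · rw [analyticAt_pi_iff]
    exact fun i => analyticAt_const.mul ((analyticAt_coord (idc ι) i 0).pow N)
  · ext i
    simp [hN]
  · refine tendsto_pi_nhds.2 fun i => ?_
    have h1 := (tendsto_pi_nhds.1 hx i).abs
    have h2 := ((Real.continuous_rpow_const (q := (N : ℝ)⁻¹) (by positivity)).tendsto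
      |(0 : ι → ℝ) i|).comp h1
    have h3 : ((N : ℝ)⁻¹) ≠ 0 := by positivity
    simpa [Function.comp_def, Real.zero_rpow h3] using h2
  · have : ∀ i, ∀ᶠ n in U,
        (if ∀ᶠ n in U, 0 ≤ x n i then (1 : ℝ) else -1) * (|x n i| ^ ((N : ℝ)⁻¹)) ^ N = x n i := by
      intro i
      have hp : ∀ n, (|x n i| ^ ((N : ℝ)⁻¹)) ^ N = |x n i| := fun n =>
        Real.rpow_inv_natCast_pow (abs_nonneg _) hN
      split_ifs with h
      · filter_upwards [h] with n hn
        rw [hp, abs_of_nonneg hn, one_mul]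
      · filter_upwards [Ultrafilter.eventually_not.2 h] with n hn
        rw [hp, abs_of_neg (not_le.1 hn)]; ring
    filter_upwards [eventually_all.2 this] with n hn
    exact funext hn

end Power

/-! ### The weighted blow-up -/

section Core

variable {ι : Type} [Fintype ι]

/-- Monomialization along `U` of functions of `(ι → ℝ) × ℝ` regular of order at most `d` in the last
variable, simultaneously with a given nonzero function `a` of the other variables. -/
def Q (ι : Type) [Fintype ι] (U : Ultrafilter ℕ) (d : ℕ) : Prop :=
  ∀ g : (ι → ℝ) × ℝ → ℝ, AnalyticAt ℝ g 0 → D^[d] g 0 ≠ 0 →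
  ∀ a : (ι → ℝ) → ℝ, AnalyticAt ℝ a 0 → ¬ a =ᶠ[𝓝 0] 0 →
  ∀ x : ℕ → (ι → ℝ) × ℝ, Tendsto x U (𝓝 0) →
  ∃ (φ : (ι → ℝ) × ℝ → (ι → ℝ) × ℝ) (y : ℕ → (ι → ℝ) × ℝ),
    Lift U φ y x ∧ NC (pc ι) (fun p => g (φ p)) ∧ NC (pc ι) (fun p => a (φ p).1)

/-- The chart at infinity of the weighted blow-up: when the last variable `s` dominates the monomial
`m`, the ratio `W = m / s` becomes an analytic germ vanishing at `0`, and `g / s ^ d` becomes a unit. -/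
lemma core_unbounded {U : Ultrafilter ℕ} {d : ℕ} {γ : ι → ℕ}
    {b : ℕ → (ι → ℝ) → ℝ} (hb : ∀ i, AnalyticAt ℝ (b i) 0) {u : (ι → ℝ) × ℝ → ℝ}
    (hu : AnalyticAt ℝ u 0) (hu0 : u 0 ≠ 0) {g : (ι → ℝ) × ℝ → ℝ}
    (hg : ∀ᶠ p in 𝓝 0, g p = ∑ i ∈ Finset.range d,
      mon (idc ι) γ p.1 ^ (d - i) * b i p.1 * p.2 ^ i + p.2 ^ d * u p)
    {a : (ι → ℝ) → ℝ} (ha : NC (idc ι) a) {x : ℕ → (ι → ℝ) × ℝ} (hx : Tendsto x U (𝓝 0))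
    (h : ∀ C : ℝ, ∀ᶠ n in U, C * |mon (idc ι) γ (x n).1| < |(x n).2|) :
    ∃ (φ : (ι → ℝ) × ℝ → (ι → ℝ) × ℝ) (y : ℕ → (ι → ℝ) × ℝ),
      Lift U φ y x ∧ NC (pc ι) (fun p => g (φ p)) ∧ NC (pc ι) (fun p => a (φ p).1) := by
  obtain ⟨φ, y, W, hL, hN, hW, hE⟩ := toric U _ γ rfl x hx h
  have hW0 : W 0 = 0 := by
    have h1 : Tendsto (fun n => W (y n)) U (𝓝 (W 0)) := hW.continuousAt.tendsto.comp hL.2.2.1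
    have h2 : Tendsto (fun n => W (y n)) U (𝓝 0) := by
      rw [tendsto_zero_iff_abs_tendsto_zero]
      refine tendsto_order.2 ⟨fun e he => Eventually.of_forall fun n =>
        he.trans_le (abs_nonneg _), fun e he => ?_⟩
      filter_upwards [h e⁻¹, hL.2.2.1.eventually hE, hL.2.2.2] with n h1 h2 h3
      rw [h3] at h2
      rw [h2, abs_mul, inv_mul_lt_iff₀ he, mul_comm e] at h1
      exact lt_of_mul_lt_mul_left h1 (abs_nonneg _)
    exact tendsto_nhds_unique h1 h2
  have hfst : AnalyticAt ℝ (fun p => (φ p).1) 0 := hL.analyticAt_comp analyticAt_fst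
  refine ⟨φ, y, hL, ?_, ha.pull_fst.comp hL.1 hL.2.1 hN⟩
  have hv : NC (pc ι) (fun p => ∑ i ∈ Finset.range d, W p ^ (d - i) * b i (φ p).1 + u (φ p)) := by
    refine NC.of_ne_zero _ (AnalyticAt.add ?_ (hL.analyticAt_comp hu)) ?_
    · refine Finset.analyticAt_fun_sum _ fun i _ => (hW.pow _).mul ?_
      exact AnalyticAt.fun_comp (by simpa [hL.2.1] using hb i) hfst
    · rw [Finset.sum_eq_zero, hL.2.1, zero_add]
      · exact hu0
      · intro i hi
        have := Finset.mem_range.1 hi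
        rw [hW0, zero_pow (by omega), zero_mul]
  refine (((hN none).pow d).mul hv).congr ?_
  filter_upwards [hE, hL.tendsto.eventually hg] with p h1 h2
  rw [h2, h1, mul_add, Finset.mul_sum, pc_none]
  congr 1
  refine Finset.sum_congr rfl fun i hi => ?_
  have : d = (d - i) + i := by have := Finset.mem_range.1 hi; omega
  conv_lhs => rw [this, pow_add]
  rw [← this]
  ring

/-- The finite charts of the weighted blow-up: when `s / m` stays bounded, it tends to some `z₀`, and
the substitution `s = m * (z₀ + s')` turns `g` into `m ^ d * G`, where the order of `G` in `s'` is less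
than `d` by `exists_iteratedDeriv_ne`. -/
lemma core_bounded {U : Ultrafilter ℕ} {d : ℕ} (IH : ∀ k < d, Q ι U k) {γ : ι → ℕ} (hγ : γ ≠ 0)
    {b : ℕ → (ι → ℝ) → ℝ} (hb : ∀ i, AnalyticAt ℝ (b i) 0) {u : (ι → ℝ) × ℝ → ℝ}
    (hu : AnalyticAt ℝ u 0) (hu0 : u 0 ≠ 0) (hbd : b (d - 1) 0 = 0) {i₀ : ℕ} (hi₀ : i₀ < d)
    (hbi : b i₀ 0 ≠ 0) {g : (ι → ℝ) × ℝ → ℝ}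
    (hg : ∀ᶠ p in 𝓝 0, g p = ∑ i ∈ Finset.range d,
      mon (idc ι) γ p.1 ^ (d - i) * b i p.1 * p.2 ^ i + p.2 ^ d * u p)
    {a : (ι → ℝ) → ℝ} (ha : NC (idc ι) a) {x : ℕ → (ι → ℝ) × ℝ} (hx : Tendsto x U (𝓝 0))
    {C : ℝ} (h : ∀ᶠ n in U, |(x n).2| ≤ C * |mon (idc ι) γ (x n).1|) :
    ∃ (φ : (ι → ℝ) × ℝ → (ι → ℝ) × ℝ) (y : ℕ → (ι → ℝ) × ℝ),
      Lift U φ y x ∧ NC (pc ι) (fun p => g (φ p)) ∧ NC (pc ι) (fun p => a (φ p).1) := by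
  set m := mon (idc ι) γ with hm
  have hm0 : m 0 = 0 := by
    obtain ⟨j, hj⟩ : ∃ j, γ j ≠ 0 := by
      by_contra! hcon
      exact hγ (funext hcon)
    rw [hm, mon]
    exact Finset.prod_eq_zero (Finset.mem_univ j) (by simp [hj])
  have hman : ∀ y, AnalyticAt ℝ m y := analyticAt_mon _ _
  obtain ⟨z₀, hz₀⟩ := exists_tendsto_of_bounded (U := U) (t := fun n => (x n).2 / m (x n).1)
    (C := |C|) (by
      filter_upwards [h] with n h1
      rw [abs_div]
      refine div_le_of_le_mul₀ (abs_nonneg _) (abs_nonneg _) (h1.trans ?_)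
      exact mul_le_mul_of_nonneg_right (le_abs_self C) (abs_nonneg _))
  set φ : (ι → ℝ) × ℝ → (ι → ℝ) × ℝ := fun p => (p.1, m p.1 * (z₀ + p.2)) with hφ
  have hL : Lift U φ (fun n => ((x n).1, (x n).2 / m (x n).1 - z₀)) x := by
    refine ⟨?_, ?_, ?_, ?_⟩
    · exact analyticAt_fst.prod ((AnalyticAt.fun_comp (hman _) analyticAt_fst).mul
        (analyticAt_const.add analyticAt_snd))
    · simp [hφ, hm0]
    · refine Tendsto.prodMk_nhds ((continuous_fst.tendsto (0 : (ι → ℝ) × ℝ)).comp hx) ?_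
      simpa using hz₀.sub_const z₀
    · filter_upwards [h] with n hn
      refine Prod.ext rfl ?_
      simp only [hφ, add_sub_cancel]
      by_cases h0 : m (x n).1 = 0
      · rw [h0, abs_zero, mul_zero] at hn
        rw [h0, zero_mul, abs_nonpos_iff.1 hn]
      · field_simp
  set G : (ι → ℝ) × ℝ → ℝ := fun p => ∑ i ∈ Finset.range d, b i p.1 * (z₀ + p.2) ^ i +
    (z₀ + p.2) ^ d * u (φ p) with hG
  have hz : AnalyticAt ℝ (fun p : (ι → ℝ) × ℝ => z₀ + p.2) 0 := analyticAt_const.add analyticAt_snd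
  have hGan : AnalyticAt ℝ G 0 := by
    refine AnalyticAt.add (Finset.analyticAt_fun_sum _ fun i _ => ?_)
      ((hz.pow _).mul (hL.analyticAt_comp hu))
    exact (AnalyticAt.fun_comp (f := Prod.fst) (x := (0 : (ι → ℝ) × ℝ)) (hb i)
      analyticAt_fst).mul (hz.pow _)
  have hgG : ∀ᶠ p in 𝓝 0, g (φ p) = m p.1 ^ d * G p := by
    filter_upwards [hL.tendsto.eventually hg] with p hp
    rw [hp, hG, mul_add, Finset.mul_sum]
    congr 1
    · refine Finset.sum_congr rfl fun i hi => ?_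
      have : d = (d - i) + i := by have := Finset.mem_range.1 hi; omega
      have e : m p.1 ^ d = m p.1 ^ (d - i) * m p.1 ^ i := by rw [← pow_add, ← this]
      rw [e]
      simp only [hφ, mul_pow]
      ring
    · have : (φ p).2 = m p.1 * (z₀ + p.2) := rfl
      rw [this, mul_pow]
      ring
  obtain ⟨k, hk, hkne⟩ := exists_iteratedDeriv_ne (d := d) (b := fun i => b i 0) (z₀ := z₀)
    hu0 hbd hi₀ hbi
  have hDk : D^[k] G 0 ≠ 0 := by
    rw [D_iter_eq_iteratedDeriv]
    have e : (fun t => G ((0 : (ι → ℝ) × ℝ).1, t)) =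
        fun t => ∑ i ∈ Finset.range d, b i 0 * (z₀ + t) ^ i + (z₀ + t) ^ d * u 0 := by
      ext t
      have : ((0 : ι → ℝ), (0 : ℝ)) = 0 := rfl
      simp [hG, hφ, hm0, this]
    rw [e]
    exact hkne
  have ha' : NC (idc ι) (fun y => a y * m y ^ d) := ha.mul ((NC.mon _ γ).pow d)
  obtain ⟨ψ, y, hL2, hN1, hN2⟩ := IH k hk G hGan hDk _ ha'.analyticAt ha'.not_eventually_zero
    _ hL.2.2.1
  have hψ : AnalyticAt ℝ (fun p => (ψ p).1) 0 := hL2.analyticAt_comp analyticAt_fst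
  have hA : AnalyticAt ℝ (fun p => a (ψ p).1) 0 :=
    AnalyticAt.fun_comp (by simpa [hL2.2.1] using ha.analyticAt) hψ
  have hM : AnalyticAt ℝ (fun p => m (ψ p).1 ^ d) 0 :=
    (AnalyticAt.fun_comp (hman _) hψ).pow d
  refine ⟨_, y, hL.comp hL2, ?_, NC.factor hA hM hN2⟩
  refine ((NC.factor hM hA (by simpa only [mul_comm] using hN2)).mul hN1).congr ?_
  filter_upwards [hL2.tendsto.eventually hgG] with p hp
  exact hp.symm

end Core

/-! ### From n variables to n + 1 -/

section Step

variable {ι : Type} [Fintype ι]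

/-- Monomialization along `U` of analytic functions of the variables `ι`: every sequence tending to
`0` lifts through a germ that pulls `f` back to normal crossings, unless `f` vanishes near `0`. -/
def P (ι : Type) [Fintype ι] (U : Ultrafilter ℕ) : Prop :=
  ∀ f : (ι → ℝ) → ℝ, AnalyticAt ℝ f 0 → ∀ x : ℕ → ι → ℝ, Tendsto x U (𝓝 0) →
  ∃ (φ : (ι → ℝ) → (ι → ℝ)) (y : ℕ → ι → ℝ), Lift U φ y x ∧
    (NC (idc ι) (fun p => f (φ p)) ∨ f =ᶠ[𝓝 0] 0)

/-- Monomializing the product of a finite family monomializes each of its nonzero members. -/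
lemma P.family {U : Ultrafilter ℕ} (hP : P ι U) {K : Type*} (s : Finset K)
    {f : K → (ι → ℝ) → ℝ} (hf : ∀ k, AnalyticAt ℝ (f k) 0) {x : ℕ → ι → ℝ}
    (hx : Tendsto x U (𝓝 0)) :
    ∃ (φ : (ι → ℝ) → (ι → ℝ)) (y : ℕ → ι → ℝ), Lift U φ y x ∧
      ∀ k ∈ s, NC (idc ι) (fun p => f k (φ p)) ∨ f k =ᶠ[𝓝 0] 0 := by
  classical
  set s' := s.filter (fun k => ¬ f k =ᶠ[𝓝 0] 0) with hs'
  have h0 := prod_not_eventually_zero s' (f := f) (fun k _ => hf k)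
    (fun k hk => (Finset.mem_filter.1 hk).2)
  obtain ⟨φ, y, hL, hN⟩ := hP (fun x => ∏ k ∈ s', f k x)
    (Finset.analyticAt_fun_prod _ fun k _ => hf k) x hx
  refine ⟨φ, y, hL, fun k hk => ?_⟩
  by_cases hz : f k =ᶠ[𝓝 0] 0
  · exact Or.inr hz
  · left
    exact NC.factor_prod s' (f := fun k p => f k (φ p)) (fun k _ => hL.analyticAt_comp (hf k))
      (hN.resolve_right h0) k (Finset.mem_filter.2 ⟨hk, hz⟩)

/-- Monomialization of a polynomial-like germ of degree `d` in `s` with no term of order `d - 1`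
(at `0`), whose coefficients are `m ^ (d - i) * bᵢ` for a nontrivial monomial `m`, one of the `bᵢ`
being a unit. -/
lemma core {U : Ultrafilter ℕ} {d : ℕ} (IH : ∀ k < d, Q ι U k) {γ : ι → ℕ} (hγ : γ ≠ 0)
    {b : ℕ → (ι → ℝ) → ℝ} (hb : ∀ i, AnalyticAt ℝ (b i) 0) {u : (ι → ℝ) × ℝ → ℝ}
    (hu : AnalyticAt ℝ u 0) (hu0 : u 0 ≠ 0) (hbd : b (d - 1) 0 = 0) {i₀ : ℕ} (hi₀ : i₀ < d)
    (hbi : b i₀ 0 ≠ 0) {g : (ι → ℝ) × ℝ → ℝ}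
    (hg : ∀ᶠ p in 𝓝 0, g p = ∑ i ∈ Finset.range d,
      mon (idc ι) γ p.1 ^ (d - i) * b i p.1 * p.2 ^ i + p.2 ^ d * u p)
    {a : (ι → ℝ) → ℝ} (ha : NC (idc ι) a) {x : ℕ → (ι → ℝ) × ℝ} (hx : Tendsto x U (𝓝 0)) :
    ∃ (φ : (ι → ℝ) × ℝ → (ι → ℝ) × ℝ) (y : ℕ → (ι → ℝ) × ℝ),
      Lift U φ y x ∧ NC (pc ι) (fun p => g (φ p)) ∧ NC (pc ι) (fun p => a (φ p).1) := by
  by_cases hcase : ∃ C : ℝ, ∀ᶠ n in U, |(x n).2| ≤ C * |mon (idc ι) γ (x n).1|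
  · obtain ⟨C, hC⟩ := hcase
    exact core_bounded IH hγ hb hu hu0 hbd hi₀ hbi hg ha hx hC
  · push Not at hcase
    exact core_unbounded hb hu hu0 hg ha hx hcase

/-- Monomialization of a germ in Tschirnhausen form. With `(d - i) * e i = 2 * d!`, all the nonzero
`cᵢ ^ e i` are made monomials times units, with normal crossings of their differences; the exponents
are then totally ordered by `exponents_comparable`, the units being positive because each `e i` is
even. If `γ` is the least exponent, the substitution `y = ± t ^ (2 * d!)` makes each `cᵢ` divisible by
`(t ^ γ) ^ (d - i)`, and `core` applies. -/
lemma normal {U : Ultrafilter ℕ} (hP : P ι U) {d : ℕ} (IH : ∀ k < d, Q ι U k)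
    {c : ℕ → (ι → ℝ) → ℝ} (hc : ∀ i, AnalyticAt ℝ (c i) 0) {u : (ι → ℝ) × ℝ → ℝ}
    (hu : AnalyticAt ℝ u 0) (hu0 : u 0 ≠ 0) (hc0 : ∀ i < d, c i 0 = 0)
    (hcd : c (d - 1) =ᶠ[𝓝 0] 0) {g : (ι → ℝ) × ℝ → ℝ}
    (hg : ∀ᶠ p in 𝓝 0, g p = ∑ i ∈ Finset.range d, c i p.1 * p.2 ^ i + p.2 ^ d * u p)
    {a : (ι → ℝ) → ℝ} (ha : AnalyticAt ℝ a 0) (ha0 : ¬ a =ᶠ[𝓝 0] 0)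
    {x : ℕ → (ι → ℝ) × ℝ} (hx : Tendsto x U (𝓝 0)) :
    ∃ (φ : (ι → ℝ) × ℝ → (ι → ℝ) × ℝ) (y : ℕ → (ι → ℝ) × ℝ),
      Lift U φ y x ∧ NC (pc ι) (fun p => g (φ p)) ∧ NC (pc ι) (fun p => a (φ p).1) := by
  classical
  set e : ℕ → ℕ := fun i => 2 * (d.factorial / (d - i)) with he
  set N : ℕ := 2 * d.factorial with hN
  have heN : ∀ i < d, (d - i) * e i = N := by
    intro i hi
    have : (d - i) ∣ d.factorial := Nat.dvd_factorial (by omega) (by omega)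
    obtain ⟨q, hq⟩ := this
    simp only [he, hN, hq]
    rw [Nat.mul_div_cancel_left _ (by omega)]
    ring
  have hN0 : N ≠ 0 := by positivity
  have he0 : ∀ i < d, e i ≠ 0 := fun i hi h => hN0 (by rw [← heN i hi, h, mul_zero])
  have hfst : Tendsto (fun n => (x n).1) U (𝓝 0) :=
    (continuous_fst.tendsto (0 : (ι → ℝ) × ℝ)).comp hx
  obtain ⟨φ₁, y₁, hL₁, hF⟩ := hP.family
    (Finset.univ : Finset (Unit ⊕ (Fin d ⊕ Fin d × Fin d)))
    (f := Sum.elim (fun _ => a) (Sum.elim (fun i => c i)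
      (fun q y => c q.1 y ^ e q.1 - c q.2 y ^ e q.2))) (by
      rintro (_ | i | q)
      · exact ha
      · exact hc _
      · exact ((hc _).pow _).sub ((hc _).pow _)) hfst
  have haN : NC (idc ι) (fun p => a (φ₁ p)) :=
    (hF (Sum.inl ()) (Finset.mem_univ _)).resolve_right ha0
  have hcN : ∀ i < d, NC (idc ι) (fun p => c i (φ₁ p)) ∨ c i =ᶠ[𝓝 0] 0 := fun i hi =>
    hF (Sum.inr (Sum.inl ⟨i, hi⟩)) (Finset.mem_univ _)
  have hcc : ∀ i < d, ∀ k < d, NC (idc ι) (fun p => c i (φ₁ p) ^ e i - c k (φ₁ p) ^ e k) ∨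
      (fun p => c i (φ₁ p) ^ e i - c k (φ₁ p) ^ e k) =ᶠ[𝓝 0] 0 := by
    intro i hi k hk
    rcases hF (Sum.inr (Sum.inr (⟨i, hi⟩, ⟨k, hk⟩))) (Finset.mem_univ _) with h | h
    · exact Or.inl h
    · exact Or.inr (hL₁.tendsto.eventually h)
  set I := (Finset.range d).filter (fun i => NC (idc ι) (fun p => c i (φ₁ p))) with hI
  have hnI : ∀ i < d, i ∉ I → c i =ᶠ[𝓝 0] 0 := by
    intro i hi h
    refine (hcN i hi).resolve_left fun h' => h ?_
    exact Finset.mem_filter.2 ⟨Finset.mem_range.2 hi, h'⟩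
  have hId : ∀ i ∈ I, i < d := fun i hi => Finset.mem_range.1 (Finset.mem_filter.1 hi).1
  rcases I.eq_empty_or_nonempty with hemp | hne
  · have hL := hL₁.snd_comp hx
    refine ⟨_, _, hL, ?_, haN.pull_fst⟩
    have h1 : ∀ᶠ y in 𝓝 (0 : ι → ℝ), ∀ i ∈ Finset.range d, c i y = 0 :=
      (eventually_all_finset _).2 fun i hi => hnI i (Finset.mem_range.1 hi) (by simp [hemp])
    have hun : NC (pc ι) (fun p => u (φ₁ p.1, p.2)) :=
      NC.of_ne_zero _ (hL.analyticAt_comp hu) (by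
        have := hL.2.1
        dsimp only at this ⊢
        rwa [this])
    refine (((NC.coord (pc ι) none).pow d).mul hun).congr ?_
    have hL' : Tendsto (fun p : (ι → ℝ) × ℝ => φ₁ p.1) (𝓝 0) (𝓝 0) :=
      hL₁.tendsto.comp (continuous_fst.tendsto (0 : (ι → ℝ) × ℝ))
    filter_upwards [hL.tendsto.eventually hg, hL'.eventually h1] with p hp1 hp2
    rw [hp1, Finset.sum_eq_zero, zero_add]
    · rfl
    · intro i hi
      rw [hp2 i hi, zero_mul]
  · have hNC : ∀ i ∈ I, NC (idc ι) (fun p => c i (φ₁ p)) := fun i hi =>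
      (Finset.mem_filter.1 hi).2
    choose! α v hv hv0 hcv using hNC
    have hcomp : ∀ i ∈ I, ∀ k ∈ I, e i • α i ≤ e k • α k ∨ e k • α k ≤ e i • α i := by
      intro i hi k hk
      have hpos : ∀ i ∈ I, 0 < v i 0 ^ e i := fun i hi =>
        (Even.pow_pos (by simp [he]) (hv0 i hi))
      have hcong : (fun p => c i (φ₁ p) ^ e i - c k (φ₁ p) ^ e k) =ᶠ[𝓝 0]
          fun p => mon (idc ι) (e i • α i) p * v i p ^ e i -
            mon (idc ι) (e k • α k) p * v k p ^ e k := by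
        filter_upwards [hcv i hi, hcv k hk] with p h1 h2
        rw [h1, h2, mon_smul, mon_smul, mul_pow, mul_pow]
      refine exponents_comparable (c := idc ι) ((hv i hi).pow (e i)) ((hv k hk).pow (e k))
        (hpos i hi) (hpos k hk) ?_
      rcases hcc i (hId i hi) k (hId k hk) with h | h
      · exact Or.inl (h.congr hcong)
      · exact Or.inr (hcong.symm.trans h)
    obtain ⟨i₀, hi₀, hmin⟩ := I.exists_minimalFor (fun i => e i • α i) hne
    have hle : ∀ i ∈ I, e i₀ • α i₀ ≤ e i • α i := fun i hi =>
      (hcomp i₀ hi₀ i hi).elim id (fun h => hmin hi h)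
    set γ := e i₀ • α i₀ with hγ
    have hγ0 : γ ≠ 0 := by
      intro h
      have hα : α i₀ = 0 := by
        funext j
        have := congrFun h j
        simpa [hγ, he0 i₀ (hId i₀ hi₀)] using this
      have h1 := (hcv i₀ hi₀).self_of_nhds
      dsimp only at h1
      rw [hL₁.2.1, hc0 i₀ (hId i₀ hi₀), hα, mon_zero, one_mul] at h1
      exact hv0 i₀ hi₀ h1.symm
    obtain ⟨ε, y₂, hε, hL₂⟩ := exists_power_subst U hN0 hL₁.2.2.1
    set ψ : (ι → ℝ) → (ι → ℝ) := fun t i => ε i * t i ^ N with hψ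
    have hmψ : ∀ i ∈ I, ∀ t, mon (idc ι) (α i) (ψ t) = (∏ j, ε j ^ α i j) *
        (mon (idc ι) γ t ^ (d - i) * mon (idc ι) ((d - i) • (e i • α i - γ)) t) := by
      intro i hi t
      have e1 : (d - i) • γ + (d - i) • (e i • α i - γ) = N • α i := by
        rw [← smul_add, add_tsub_cancel_of_le (hle i hi), smul_smul, heN i (hId i hi)]
      rw [← mon_smul, ← mon_add, e1, mon_smul]
      simp only [mon, hψ, ContinuousLinearEquiv.coe_refl', id, mul_pow]
      rw [Finset.prod_mul_distrib, ← Finset.prod_pow]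
      congr 1
      refine Finset.prod_congr rfl fun j _ => ?_
      rw [← pow_mul, ← pow_mul, mul_comm]
    set b : ℕ → (ι → ℝ) → ℝ := fun i => if i ∈ I then fun t => (∏ j, ε j ^ α i j) *
        mon (idc ι) ((d - i) • (e i • α i - γ)) t * v i (ψ t) else fun _ => 0 with hb
    have hban : ∀ i, AnalyticAt ℝ (b i) 0 := by
      intro i
      simp only [hb]
      split_ifs with hi
      · exact (analyticAt_const.mul (analyticAt_mon _ _ _)).mul (hL₂.analyticAt_comp (hv i hi))
      · exact analyticAt_const
    have hbc : ∀ᶠ t in 𝓝 (0 : ι → ℝ), ∀ i ∈ Finset.range d,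
        c i (φ₁ (ψ t)) = mon (idc ι) γ t ^ (d - i) * b i t := by
      refine (eventually_all_finset _).2 fun i hi => ?_
      by_cases hiI : i ∈ I
      · filter_upwards [hL₂.tendsto.eventually (hcv i hiI)] with t ht
        simp only [hb, hiI, if_true]
        rw [ht, hmψ i hiI]
        ring
      · filter_upwards [(hL₁.comp hL₂).tendsto.eventually (hnI i (Finset.mem_range.1 hi) hiI)]
          with t ht
        simp only [hb, hiI, if_false, mul_zero]
        exact ht
    have hLc := (hL₁.comp hL₂).snd_comp hx
    have hg' : ∀ᶠ p in 𝓝 (0 : (ι → ℝ) × ℝ), g (φ₁ (ψ p.1), p.2) = ∑ i ∈ Finset.range d,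
        mon (idc ι) γ p.1 ^ (d - i) * b i p.1 * p.2 ^ i + p.2 ^ d * u (φ₁ (ψ p.1), p.2) := by
      filter_upwards [hLc.tendsto.eventually hg,
        (continuous_fst.tendsto (0 : (ι → ℝ) × ℝ)).eventually hbc] with p h1 h2
      rw [h1]
      congr 1
      exact Finset.sum_congr rfl fun i hi => by rw [← h2 i hi]
    have hdI : d - 1 ∉ I := fun h =>
      (Finset.mem_filter.1 h).2.not_eventually_zero (hL₁.tendsto.eventually hcd)
    obtain ⟨χ, y, hL₃, h1, h2⟩ := core (u := fun p => u (φ₁ (ψ p.1), p.2)) (b := b)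
      (a := fun t => a (φ₁ (ψ t))) IH hγ0 hban (hLc.analyticAt_comp hu) (by
        have := hLc.2.1
        dsimp only at this ⊢
        rwa [this]) (by simp [hb, hdI]) (hId i₀ hi₀) (by
        have hψ0 : ψ 0 = 0 := hL₂.2.1
        have : (d - i₀) • (e i₀ • α i₀ - γ) = 0 := by rw [hγ, tsub_self, smul_zero]
        simp only [hb, hi₀, if_true, this, mon_zero, hψ0]
        refine mul_ne_zero (mul_ne_zero ?_ one_ne_zero) (hv0 i₀ hi₀)
        exact Finset.prod_ne_zero_iff.2 fun j _ => pow_ne_zero _ (hε j)) hg'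
      (haN.comp hL₂.1 hL₂.2.1 fun i =>
        (NC.of_ne_zero _ analyticAt_const (hε i)).mul ((NC.coord (idc ι) i).pow N)) hLc.2.2.1
    exact ⟨_, y, hLc.comp hL₃, h1, h2⟩

/-- Induction on the order `d`. The zero of the `(d - 1)`-st derivative in the last variable, given by
the implicit function theorem, is moved to `s = 0`, which removes the term of order `d - 1`. -/
lemma Q_of_P {U : Ultrafilter ℕ} (hP : P ι U) (d : ℕ) : Q ι U d := by
  induction d using Nat.strong_induction_on with
  | _ d IH =>
  intro g hg hgd a ha ha0 x hx
  by_cases hlow : ∃ k < d, D^[k] g 0 ≠ 0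
  · obtain ⟨k, hk, hk0⟩ := hlow
    exact IH k hk g hg hk0 a ha ha0 x hx
  push Not at hlow
  rcases Nat.eq_zero_or_pos d with rfl | hd
  · obtain ⟨φ₁, y₁, hL₁, hF⟩ := hP a ha (fun n => (x n).1)
      ((continuous_fst.tendsto (0 : (ι → ℝ) × ℝ)).comp hx)
    have hL := hL₁.snd_comp hx
    refine ⟨_, _, hL, NC.of_ne_zero _ (hL.analyticAt_comp hg) ?_,
      (hF.resolve_right ha0).pull_fst⟩
    have := hL.2.1
    dsimp only at this ⊢
    rw [this]
    exact hgd
  · have hd1 : d - 1 + 1 = d := by omega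
    obtain ⟨h, hh, hh0, hz⟩ := exists_implicit (D_iter_analyticAt hg (d - 1))
      (hlow (d - 1) (by omega)) (by
        rw [← Function.iterate_succ_apply' D, Nat.succ_eq_add_one, hd1]; exact hgd)
    have hL : Lift U (fun q : (ι → ℝ) × ℝ => (q.1, h q.1 + q.2))
        (fun n => ((x n).1, (x n).2 - h (x n).1)) x := by
      have hx1 := (continuous_fst.tendsto (0 : (ι → ℝ) × ℝ)).comp hx
      have hx2 := (continuous_snd.tendsto (0 : (ι → ℝ) × ℝ)).comp hx
      refine ⟨analyticAt_fst.prod (AnalyticAt.add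
        (AnalyticAt.fun_comp (f := Prod.fst) (x := (0 : (ι → ℝ) × ℝ)) hh analyticAt_fst)
        analyticAt_snd), ?_, ?_, ?_⟩
      · simp [hh0]
      · refine hx1.prodMk_nhds ?_
        have := hx2.sub ((tendsto_zero_of_analyticAt hh hh0).comp hx1)
        simpa using this
      · exact Eventually.of_forall fun n => by simp
    set g' : (ι → ℝ) × ℝ → ℝ := fun q => g (q.1, h q.1 + q.2) with hg'
    have hg'an : AnalyticAt ℝ g' 0 := hL.analyticAt_comp hg
    have hD0 : ∀ k, D^[k] g' 0 = D^[k] g 0 := by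
      intro k
      rw [hg', D_iter_shift]
      simp [hh0]
      rfl
    obtain ⟨c, u, hc, hu, h1, h2, h3⟩ := exists_taylor d hg'an
    obtain ⟨χ, y, hL₃, e1, e2⟩ := normal hP IH hc hu (by
        have := h3.self_of_nhds
        intro h0
        change D^[d] g' 0 = d.factorial * u 0 at this
        rw [h0, mul_zero, hD0] at this
        exact hgd this) (by
        intro i hi
        have := (h2 i hi).self_of_nhds
        change D^[i] g' 0 = _ at this
        rw [hD0, hlow i hi] at this
        simpa [Nat.factorial_ne_zero] using this.symm) (by
        filter_upwards [h2 (d - 1) (by omega), hz] with y hy1 hy2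
        rw [hg', D_iter_shift] at hy1
        dsimp only at hy1
        rw [add_zero, hy2] at hy1
        simpa [Nat.factorial_ne_zero] using hy1.symm) h1 ha ha0 hL.2.2.1
    exact ⟨_, y, hL.comp hL₃, e1, e2⟩

end Step

/-! ### Local monomialization -/

section Resolution

lemma eventually_zero_of_iteratedDeriv {h : ℝ → ℝ} (hh : AnalyticAt ℝ h 0)
    (h0 : ∀ k, iteratedDeriv k h 0 = 0) : h =ᶠ[𝓝 0] 0 := by
  refine analyticOrderAt_eq_top.1 (ENat.eq_top_iff_forall_ge.2 fun m => ?_)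
  exact (natCast_le_analyticOrderAt_iff_iteratedDeriv_eq_zero hh).2 fun i _ => h0 i

/-- After a linear change of variables a nonzero analytic germ is regular of some finite order in the
last variable: send the last axis to a line through a point of a ball of analyticity where `g` does
not vanish. -/
lemma exists_regular {E : Type*} [NormedAddCommGroup E] [NormedSpace ℝ E]
    {g : E × ℝ → ℝ} (hg : AnalyticAt ℝ g 0) (hg0 : ¬ g =ᶠ[𝓝 0] 0) :
    ∃ (L : (E × ℝ) ≃L[ℝ] (E × ℝ)) (d : ℕ), D^[d] (fun p => g (L p)) 0 ≠ 0 := by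
  by_cases h0 : g 0 = 0
  swap
  · exact ⟨ContinuousLinearEquiv.refl ℝ _, 0, h0⟩
  obtain ⟨r, hr, hB⟩ := Metric.eventually_nhds_iff_ball.1 hg.eventually_analyticAt
  obtain ⟨v, hv, hgv⟩ : ∃ v ∈ Metric.ball (0 : E × ℝ) r, g v ≠ 0 := by
    by_contra! hcon
    exact hg0 (Filter.mem_of_superset (Metric.ball_mem_nhds _ hr) hcon)
  have hv0 : v ≠ 0 := by rintro rfl; exact hgv h0
  obtain ⟨L, hL⟩ := SeparatingDual.exists_continuousLinearEquiv_apply_eq (R := ℝ)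
    (x := ((0, 1) : E × ℝ)) (y := v) (by simp) hv0
  refine ⟨L, ?_⟩
  by_contra! hcon
  set h : ℝ → ℝ := fun t => g (t • v) with hh
  have hLt : ∀ t : ℝ, L ((0 : E × ℝ).1, t) = t • v := by
    intro t
    rw [← hL, ← map_smul]
    simp
  have hlin : ∀ t : ℝ, AnalyticAt ℝ (fun t : ℝ => t • v) t := fun t =>
    analyticAt_id.smul analyticAt_const
  have hz : h =ᶠ[𝓝 0] 0 := by
    refine eventually_zero_of_iteratedDeriv ?_ fun k => ?_
    · exact AnalyticAt.fun_comp (by simpa using hg) (hlin 0)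
    · have := hcon k
      rw [D_iter_eq_iteratedDeriv] at this
      simp only [hLt] at this
      exact this
  have hconv : Convex ℝ ((fun t : ℝ => t • v) ⁻¹' Metric.ball (0 : E × ℝ) r) :=
    (convex_ball _ _).is_linear_preimage ((LinearMap.id.smulRight v).isLinear)
  have han : AnalyticOnNhd ℝ h ((fun t : ℝ => t • v) ⁻¹' Metric.ball (0 : E × ℝ) r) :=
    fun t ht => AnalyticAt.fun_comp (hB _ ht) (hlin t)
  have := han.eqOn_zero_of_preconnected_of_eventuallyEq_zero hconv.isPreconnected
    (z₀ := 0) (by simpa using hr) hz (x := 1) (by simpa using hv)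
  exact hgv (by simpa [hh] using this)

lemma analyticAt_equiv {E F : Type*} [NormedAddCommGroup E] [NormedSpace ℝ E]
    [NormedAddCommGroup F] [NormedSpace ℝ F] (e : E ≃L[ℝ] F) (x : E) :
    AnalyticAt ℝ (fun p => e p) x := (e : E →L[ℝ] F).analyticAt x

lemma lift_equiv {E F : Type*} [NormedAddCommGroup E] [NormedSpace ℝ E]
    [NormedAddCommGroup F] [NormedSpace ℝ F] (U : Ultrafilter ℕ) (e : E ≃L[ℝ] F) {x : ℕ → F}
    (hx : Tendsto x U (𝓝 0)) : Lift U (fun p => e p) (fun n => e.symm (x n)) x := by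
  refine ⟨analyticAt_equiv e 0, map_zero e, ?_, Eventually.of_forall fun n => by simp⟩
  have := (e.symm.continuous.tendsto 0).comp hx
  rwa [map_zero] at this

lemma P_of_isEmpty (ι : Type) [Fintype ι] [IsEmpty ι] (U : Ultrafilter ℕ) : P ι U := by
  intro f hf x hx
  refine ⟨fun p => p, x, ⟨analyticAt_id, rfl, hx, Eventually.of_forall fun _ => rfl⟩, ?_⟩
  by_cases h0 : f 0 = 0
  · refine Or.inr (Eventually.of_forall fun p => ?_)
    rw [Subsingleton.elim p 0, h0]
    rfl
  · exact Or.inl (NC.of_ne_zero _ hf h0)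

lemma P_option (ι : Type) [Fintype ι] (U : Ultrafilter ℕ) (hP : P ι U) : P (Option ι) U := by
  intro f hf x hx
  by_cases hf0 : f =ᶠ[𝓝 0] 0
  · exact ⟨fun p => p, x, ⟨analyticAt_id, rfl, hx, Eventually.of_forall fun _ => rfl⟩,
      Or.inr hf0⟩
  have hL₁ := lift_equiv U (pc ι) hx
  have hg0 : ¬ (fun p => f (pc ι p)) =ᶠ[𝓝 0] 0 := by
    intro h
    have := (lift_equiv U (pc ι).symm hL₁.2.2.1).tendsto.eventually h
    have h' : ∀ᶠ q in 𝓝 0, f q = 0 := by simpa using this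
    exact hf0 h'
  obtain ⟨L, d, hd⟩ := exists_regular (hL₁.analyticAt_comp hf) hg0
  have hL₂ := hL₁.comp (lift_equiv U L hL₁.2.2.1)
  obtain ⟨φ, y, hL₃, hN, -⟩ := Q_of_P hP d _ (hL₂.analyticAt_comp hf) hd (fun _ => 1)
    analyticAt_const (fun h => one_ne_zero h.self_of_nhds) _ hL₂.2.2.1
  have hL₄ := lift_equiv U (pc ι).symm hL₃.2.2.1
  refine ⟨_, _, (hL₂.comp hL₃).comp hL₄, Or.inl ?_⟩
  refine hN.comp hL₄.1 hL₄.2.1 fun o => ?_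
  simpa using NC.coord (idc (Option ι)) o

lemma exists_P (U : Ultrafilter ℕ) (n : ℕ) :
    ∃ (ι : Type) (_ : Fintype ι), Fintype.card ι = n ∧ P ι U := by
  induction n with
  | zero => exact ⟨Empty, inferInstance, rfl, P_of_isEmpty _ U⟩
  | succ n ih =>
    obtain ⟨ι, hι, hn, hP⟩ := ih
    exact ⟨Option ι, inferInstance, by rw [Fintype.card_option, hn], P_option ι U hP⟩

/-- Local monomialization of a nonzero analytic germ on a finite-dimensional space, along an
ultrafilter and a sequence tending to the origin. -/
lemma resolution {E : Type*} [NormedAddCommGroup E] [NormedSpace ℝ E] [FiniteDimensional ℝ E]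
    (U : Ultrafilter ℕ) {f : E → ℝ} (hf : AnalyticAt ℝ f 0) (hf0 : ¬ f =ᶠ[𝓝 0] 0) {x : ℕ → E}
    (hx : Tendsto x U (𝓝 0)) :
    ∃ (ι : Type) (_ : Fintype ι) (φ : (ι → ℝ) → E) (y : ℕ → ι → ℝ), Lift U φ y x ∧
      NC (idc ι) (fun p => f (φ p)) := by
  obtain ⟨ι, hι, hn, hP⟩ := exists_P U (Module.finrank ℝ E)
  have e : (ι → ℝ) ≃L[ℝ] E := ContinuousLinearEquiv.ofFinrankEq (by simp [hn])
  have hL₁ := lift_equiv U e hx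
  obtain ⟨φ, y, hL, hN⟩ := hP _ (hL₁.analyticAt_comp hf) _ hL₁.2.2.1
  refine ⟨ι, hι, _, y, hL₁.comp hL, hN.resolve_right fun h => hf0 ?_⟩
  have := (lift_equiv U e.symm hL₁.2.2.1).tendsto.eventually h
  have h' : ∀ᶠ q in 𝓝 0, f q = 0 := by simpa using this
  exact h'

end Resolution

/-! ### The Łojasiewicz gradient inequality -/

section Gradient

/-- Euler identity `p_j ∂_j (p ^ α) = α_j p ^ α`, read off from `t ↦ (1 + t) ^ α_j * p ^ α`. -/
lemma fderiv_mon_apply {ι : Type} [Fintype ι] [DecidableEq ι] (α : ι → ℕ) (p : ι → ℝ) (j : ι) :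
    fderiv ℝ (mon (idc ι) α) p (Pi.single j (p j)) = α j * mon (idc ι) α p := by
  have h1 : HasDerivAt (fun t : ℝ => p + t • (Pi.single j (p j) : ι → ℝ))
      (Pi.single j (p j)) 0 := by
    simpa using ((hasDerivAt_id (0 : ℝ)).smul_const (Pi.single j (p j) : ι → ℝ)).const_add p
  have h2 : HasFDerivAt (mon (idc ι) α) (fderiv ℝ (mon (idc ι) α) p)
      (p + (0 : ℝ) • (Pi.single j (p j) : ι → ℝ)) := by
    simpa using (analyticAt_mon (idc ι) α p).differentiableAt.hasFDerivAt
  have h3 := h2.comp_hasDerivAt 0 h1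
  have h4 : (mon (idc ι) α ∘ fun t : ℝ => p + t • (Pi.single j (p j) : ι → ℝ)) =
      fun t => (1 + t) ^ α j * mon (idc ι) α p := by
    funext t
    simp only [Function.comp, mon, idc, ContinuousLinearEquiv.refl_apply]
    rw [← Finset.mul_prod_erase _ _ (Finset.mem_univ j),
      ← Finset.mul_prod_erase _ (fun i => p i ^ α i) (Finset.mem_univ j), ← mul_assoc, ← mul_pow]
    congr 1
    · simp; ring
    · refine Finset.prod_congr rfl fun i hi => ?_
      simp [Finset.ne_of_mem_erase hi]
  rw [h4] at h3
  have h5 : HasDerivAt (fun t : ℝ => (1 + t) ^ α j * mon (idc ι) α p)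
      (α j * mon (idc ι) α p) 0 := by
    simpa using (((hasDerivAt_id (0 : ℝ)).const_add 1).pow (α j)).mul_const (mon (idc ι) α p)
  exact h3.unique h5

/-- The Łojasiewicz gradient inequality for a monomial times a unit, with `N` the degree of the
monomial. For the smallest coordinate `p_j` occurring in it, the Euler identity gives
`|G p| ≤ 2 |p_j| ‖G'(p)‖`, while `|p_j| ^ N` is at most a multiple of `|G p|`. -/
lemma NC.gradient_bound {ι : Type} [Fintype ι] {G : (ι → ℝ) → ℝ} (hG : NC (idc ι) G)
    (h0 : G 0 = 0) : ∃ C > 0, ∃ N : ℕ, 1 ≤ N ∧ ∀ᶠ p in 𝓝 0, G p ≠ 0 →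
      |G p| ^ (1 - 1 / (N : ℝ)) ≤ C * ‖fderiv ℝ G p‖ := by
  classical
  obtain ⟨α, u, hu, hu0, hGe⟩ := hG
  have hα : ∃ j, α j ≠ 0 := by
    by_contra! h
    have := hGe.self_of_nhds
    simp only [h0, show α = 0 from funext h, mon_zero, one_mul] at this
    exact hu0 this.symm
  obtain ⟨j₀, hj₀⟩ := hα
  set N := ∑ i, α i with hN
  have hN1 : 1 ≤ N := (Nat.one_le_iff_ne_zero.2 hj₀).trans
    (Finset.single_le_sum (f := α) (fun _ _ => Nat.zero_le _) (Finset.mem_univ j₀))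
  have hNr : (0 : ℝ) < N := by exact_mod_cast hN1
  set a := |u 0| / 2 with ha
  have hapos : 0 < a := by positivity
  have E1 : ∀ᶠ p in 𝓝 0, a < |u p| :=
    hu.continuousAt.abs.eventually (lt_mem_nhds (by rw [ha]; have := abs_pos.2 hu0; linarith))
  have E2 : ∀ᶠ p : ι → ℝ in 𝓝 0, ‖p‖ * ‖fderiv ℝ u p‖ < a / 2 := by
    have : ContinuousAt (fun p : ι → ℝ => ‖p‖ * ‖fderiv ℝ u p‖) 0 :=
      continuous_norm.continuousAt.mul hu.fderiv.continuousAt.norm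
    exact this.eventually (gt_mem_nhds (by simp; positivity))
  refine ⟨2 * (1 / a) ^ (1 / (N : ℝ)), by positivity, N, hN1, ?_⟩
  filter_upwards [hGe, hGe.fderiv (𝕜 := ℝ), hu.eventually_analyticAt, E1, E2] with p h1 h2 h3 h4 h5 hGp
  set m := Loj.mon (idc ι) α p with hm
  have hmp : m ≠ 0 := fun h => hGp (by rw [h1, h, zero_mul])
  have hup : u p ≠ 0 := fun h => hGp (by rw [h1, h, mul_zero])
  -- the smallest of the coordinates that occur in the monomial
  obtain ⟨j, hj, hjmin⟩ := Finset.exists_min_image (Finset.univ.filter fun i => α i ≠ 0)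
    (fun i => |p i|) ⟨j₀, by simpa using hj₀⟩
  have hαj : 1 ≤ α j := Nat.one_le_iff_ne_zero.2 (by simpa using hj)
  have hpj : p j ≠ 0 := by
    intro h
    refine hmp (Finset.prod_eq_zero (Finset.mem_univ j) ?_)
    simp [idc, h, Nat.one_le_iff_ne_zero.1 hαj]
  have hlow : |p j| ^ N ≤ |m| := by
    rw [hm, Loj.mon, Finset.abs_prod, hN, ← Finset.prod_pow_eq_pow_sum]
    refine Finset.prod_le_prod (fun _ _ => by positivity) fun i _ => ?_
    rw [abs_pow]
    by_cases hi : α i = 0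
    · simp [hi]
    · exact pow_le_pow_left₀ (abs_nonneg _) (hjmin i (by simpa using hi)) _
  have hlow2 : |p j| ≤ (1 / a) ^ (1 / (N : ℝ)) * |G p| ^ (1 / (N : ℝ)) := by
    rw [← Real.mul_rpow (by positivity) (abs_nonneg _)]
    have h6 : |p j| ^ N ≤ 1 / a * |G p| := by
      rw [h1, abs_mul, one_div, ← div_eq_inv_mul, le_div_iff₀ hapos]
      exact mul_le_mul hlow h4.le hapos.le (abs_nonneg _)
    calc |p j| = (|p j| ^ N) ^ (1 / (N : ℝ)) := by
          rw [one_div, Real.pow_rpow_inv_natCast (abs_nonneg _) (by omega)]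
      _ ≤ _ := Real.rpow_le_rpow (by positivity) h6 (by positivity)
  -- near the origin the derivative of the unit perturbs the Euler identity by at most `|G p| / 2`
  set e : ι → ℝ := Pi.single j (p j) with he
  have hen : ‖e‖ = |p j| := by rw [he, Pi.norm_single]; rfl
  have hd : fderiv ℝ G p e = α j * G p + m * fderiv ℝ u p e := by
    rw [h2, fderiv_fun_mul (analyticAt_mon _ _ _).differentiableAt h3.differentiableAt, h1]
    simp only [add_apply, smul_apply, smul_eq_mul, he,
      fderiv_mon_apply]
    ring
  have herr : |m * fderiv ℝ u p e| ≤ |G p| / 2 := by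
    rw [abs_mul, h1, abs_mul, mul_div_assoc]
    refine mul_le_mul_of_nonneg_left ?_ (abs_nonneg _)
    calc |fderiv ℝ u p e| ≤ ‖fderiv ℝ u p‖ * ‖e‖ := (fderiv ℝ u p).le_opNorm e
      _ ≤ ‖fderiv ℝ u p‖ * ‖p‖ := by
          rw [hen]; gcongr; exact norm_le_pi_norm p j
      _ ≤ _ := by linarith
  have hmain : |G p| / 2 ≤ ‖fderiv ℝ G p‖ * |p j| := by
    have h7 : |fderiv ℝ G p e| ≤ ‖fderiv ℝ G p‖ * |p j| := by
      rw [← hen]; exact (fderiv ℝ G p).le_opNorm e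
    have h8 : |(α j : ℝ) * G p| ≤ |fderiv ℝ G p e| + |m * fderiv ℝ u p e| := by
      rw [show (α j : ℝ) * G p = fderiv ℝ G p e - m * fderiv ℝ u p e by rw [hd]; ring]
      exact abs_sub _ _
    have h9 : |G p| ≤ |(α j : ℝ) * G p| := by
      rw [abs_mul]
      have : (1 : ℝ) ≤ |(α j : ℝ)| := by rw [Nat.abs_cast]; exact_mod_cast hαj
      nlinarith [abs_nonneg (G p)]
    linarith
  have hGpos : 0 < |G p| := abs_pos.2 hGp
  have hpow : |G p| ^ (1 - 1 / (N : ℝ)) * |G p| ^ (1 / (N : ℝ)) = |G p| := by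
    rw [← Real.rpow_add hGpos]; simp
  have hpos : 0 < |G p| ^ (1 / (N : ℝ)) := by positivity
  refine le_of_mul_le_mul_right ?_ hpos
  rw [hpow]
  have := mul_le_mul_of_nonneg_left hlow2 (norm_nonneg (fderiv ℝ G p))
  linarith

/-- The Łojasiewicz gradient inequality. Were it to fail, there would be `x_k → x₀` violating it with
constant `1 / (k + 1)` and exponent `1 - 1 / (k + 3)`; lifting this sequence through a germ provided by
`resolution` contradicts `NC.gradient_bound`. -/
theorem lojasiewicz {E : Type*} [NormedAddCommGroup E] [NormedSpace ℝ E] [FiniteDimensional ℝ E]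
    {f : E → ℝ} {x₀ : E} (hf : AnalyticAt ℝ f x₀) :
    ∃ c > 0, ∃ θ : ℝ, 1 / 2 < θ ∧ θ < 1 ∧
      ∀ᶠ x in 𝓝 x₀, c * |f x - f x₀| ^ θ ≤ ‖fderiv ℝ f x‖ := by
  by_contra! hcon
  have hθ : ∀ k : ℕ, 1 / 2 < 1 - 1 / ((k : ℝ) + 3) ∧ 1 - 1 / ((k : ℝ) + 3) < 1 := by
    intro k
    have h3 : 1 / ((k : ℝ) + 3) ≤ 1 / 3 := by gcongr; simp
    have : 0 < 1 / ((k : ℝ) + 3) := by positivity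
    constructor <;> linarith
  have hex : ∀ k : ℕ, ∃ x ∈ Metric.ball x₀ (1 / ((k : ℝ) + 1)), ‖fderiv ℝ f x‖ <
      1 / ((k : ℝ) + 1) * |f x - f x₀| ^ (1 - 1 / ((k : ℝ) + 3)) := by
    intro k
    have := hcon (1 / ((k : ℝ) + 1)) (by positivity) _ (hθ k).1 (hθ k).2
    obtain ⟨x, hx1, hx2⟩ := (this.and_eventually
      (Metric.ball_mem_nhds x₀ (show 0 < 1 / ((k : ℝ) + 1) by positivity))).exists
    exact ⟨x, hx2, hx1⟩
  choose x hxball hx using hex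
  set U : Ultrafilter ℕ := hyperfilter ℕ
  have hU : (U : Filter ℕ) ≤ atTop := Nat.hyperfilter_le_atTop
  set z : ℕ → E := fun k => x k - x₀ with hz
  have hzlim : Tendsto z U (𝓝 0) := by
    refine Tendsto.mono_left ?_ hU
    refine squeeze_zero_norm (fun k => ?_) tendsto_one_div_add_atTop_nhds_zero_nat
    have := hxball k
    rw [mem_ball_iff_norm] at this
    exact this.le
  set F : E → ℝ := fun y => f (x₀ + y) - f x₀ with hFdef
  have hF : AnalyticAt ℝ F 0 := by
    refine AnalyticAt.fun_sub ?_ analyticAt_const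
    exact AnalyticAt.fun_comp (f := fun y => x₀ + y) (by simpa using hf)
      (analyticAt_const.add analyticAt_id)
  have hFz : ∀ k, F (z k) = f (x k) - f x₀ := fun k => by simp [hFdef, hz]
  have hFd : ∀ k, fderiv ℝ F (z k) = fderiv ℝ f (x k) := fun k => by
    simp only [hFdef, fderiv_sub_const, fderiv_comp_add_left]
    simp [hz]
  -- a strict inequality with right-hand side `0` is impossible
  have hFne : ∀ k, F (z k) ≠ 0 := by
    intro k h
    have := hx k
    rw [← hFz, h, abs_zero, Real.zero_rpow (by have := (hθ k).1; linarith), mul_zero] at this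
    exact absurd this (not_lt.2 (norm_nonneg _))
  have hF0 : ¬ F =ᶠ[𝓝 0] 0 := by
    intro h
    obtain ⟨k, hk⟩ := (hzlim.eventually h).exists
    exact hFne k hk
  obtain ⟨ι, _, φ, y, hL, hN⟩ := resolution U hF hF0 hzlim
  obtain ⟨C, hC, N, hN1, hb⟩ := hN.gradient_bound (by rw [hL.2.1]; simp [hFdef])
  obtain ⟨hφ, hφ0, hy, hφy⟩ := hL
  set M := ‖fderiv ℝ φ 0‖ + 1
  have hM : 0 < M := by positivity
  have E1 : ∀ᶠ p in 𝓝 0, ‖fderiv ℝ φ p‖ < M :=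
    hφ.fderiv.continuousAt.norm.eventually (gt_mem_nhds (by simp [M]))
  have E2 : ∀ᶠ k in U, |F (z k)| ≤ 1 := by
    have : Tendsto (fun k => |F (z k)|) U (𝓝 |F 0|) := (hF.continuousAt.tendsto.comp hzlim).abs
    have h1 : |F 0| < 1 := by simp [hFdef]
    exact (this.eventually (gt_mem_nhds h1)).mono fun _ h => h.le
  have E3 : ∀ᶠ k : ℕ in U, N ≤ k ∧ C * M < (k : ℝ) + 1 := by
    refine hU ((eventually_ge_atTop N).and ?_)
    obtain ⟨K, hK⟩ := exists_nat_gt (C * M)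
    filter_upwards [eventually_ge_atTop K] with k hk
    have : (K : ℝ) ≤ k := by exact_mod_cast hk
    linarith
  obtain ⟨k, h1, h2, h3, h4, h5, h7, h8⟩ := (hφy.and ((hy.eventually hb).and
    ((hy.eventually E1).and (E2.and (E3.and ((hy.eventually hφ.eventually_analyticAt).and
    (hzlim.eventually hF.eventually_analyticAt))))))).exists
  obtain ⟨h5, h6⟩ := h5
  rw [h1] at h2
  have hcomp : fderiv ℝ (fun p => F (φ p)) (y k) =
      (fderiv ℝ F (z k)).comp (fderiv ℝ φ (y k)) := by
    rw [← h1]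
    exact fderiv_comp (g := F) (y k) (by rw [h1]; exact h8.differentiableAt) h7.differentiableAt
  have hpos : 0 < |F (z k)| := abs_pos.2 (hFne k)
  set A := |F (z k)| ^ (1 - 1 / (N : ℝ))
  have hA : 0 < A := by positivity
  have hNk : 1 / ((k : ℝ) + 3) ≤ 1 / (N : ℝ) := by
    have hN1' : (0 : ℝ) < N := by exact_mod_cast hN1
    have : (N : ℝ) ≤ k := by exact_mod_cast h5
    gcongr
    linarith
  have g1 : |F (z k)| ^ (1 - 1 / ((k : ℝ) + 3)) ≤ A :=
    Real.rpow_le_rpow_of_exponent_ge hpos h4 (by linarith)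
  have g2 : ‖fderiv ℝ F (z k)‖ ≤ 1 / ((k : ℝ) + 1) * A := by
    rw [hFd]
    refine (hx k).le.trans ?_
    rw [← hFz]
    gcongr
  have g3 : A ≤ C * (1 / ((k : ℝ) + 1) * A * M) := by
    refine (h2 (hFne k)).trans ?_
    rw [hcomp]
    gcongr
    refine (ContinuousLinearMap.opNorm_comp_le _ _).trans ?_
    gcongr
  have g4 : C * M * A < ((k : ℝ) + 1) * A := by gcongr
  have g5 : C * (1 / ((k : ℝ) + 1) * A * M) = C * M * A / ((k : ℝ) + 1) := by ring
  rw [g5, le_div_iff₀ (by positivity)] at g3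
  linarith

end Gradient

/-! ### The gradient flow -/

section Flow

variable {E : Type*} [NormedAddCommGroup E] [InnerProductSpace ℝ E] [FiniteDimensional ℝ E]
  [CompleteSpace E]

lemma norm_gradient (f : E → ℝ) (x : E) : ‖gradient f x‖ = ‖fderiv ℝ f x‖ := by
  simp [gradient]

/-- The energy `f` decreases along the flow at the rate `‖∇f‖ ^ 2`. -/
lemma hasDerivAt_energy {f : E → ℝ} {ξ : ℝ → E} {t : ℝ} (hf : DifferentiableAt ℝ f (ξ t))
    (hξ : HasDerivAt ξ (-(gradient f (ξ t))) t) :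
    HasDerivAt (fun s => f (ξ s)) (-‖gradient f (ξ t)‖ ^ 2) t := by
  have h := hf.hasGradientAt.hasFDerivAt.comp_hasDerivAt t hξ
  refine h.congr_deriv ?_
  rw [InnerProductSpace.toDual_apply_apply, inner_neg_right, real_inner_self_eq_norm_sq]

/-- Trapping: if inside the ball of radius `r` about `ξ₀` the speed of `ξ` is at most the rate of
decrease of a nonnegative function `Φ`, then `ξ` travels a distance at most `Φ t₁` after time `t₁`,
hence cannot reach the boundary of the ball. A small linear drift `δ * (s - t₁)` makes the comparison
strict. -/
lemma trapped {ξ ξ' : ℝ → E} {Φ Φ' : ℝ → ℝ} {ξ₀ : E} {r t₁ : ℝ}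
    (hξ : ∀ t, t₁ ≤ t → HasDerivAt ξ (ξ' t) t) (hΦ : ∀ t, t₁ ≤ t → HasDerivAt Φ (Φ' t) t)
    (hΦ0 : ∀ t, t₁ ≤ t → 0 ≤ Φ t) (hr : ‖ξ t₁ - ξ₀‖ + Φ t₁ < r)
    (hbd : ∀ t, t₁ ≤ t → ‖ξ t - ξ₀‖ < r → ‖ξ' t‖ ≤ -Φ' t) {t : ℝ} (ht : t₁ ≤ t) :
    ‖ξ t - ξ₀‖ < r := by
  set δ := (r - (‖ξ t₁ - ξ₀‖ + Φ t₁)) / (2 * (t - t₁ + 1)) with hδ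
  have hpos : 0 < t - t₁ + 1 := by linarith
  have hδpos : 0 < δ := div_pos (by linarith) (by linarith)
  have hδt : δ * (t - t₁ + 1) = (r - (‖ξ t₁ - ξ₀‖ + Φ t₁)) / 2 := by
    rw [hδ]; field_simp
  set B : ℝ → ℝ := fun s => ‖ξ t₁ - ξ₀‖ + Φ t₁ - Φ s + δ * (s - t₁) with hB
  have hBr : ∀ s, t₁ ≤ s → s ≤ t → B s < r := by
    intro s h1 h2
    have := hΦ0 s h1
    simp only [hB]
    nlinarith
  have hBd : ∀ s, t₁ ≤ s → HasDerivAt B (-Φ' s + δ) s := by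
    intro s hs
    have h1 := ((hΦ s hs).const_sub (‖ξ t₁ - ξ₀‖ + Φ t₁)).add
      (((hasDerivAt_id s).sub_const t₁).const_mul δ)
    exact h1.congr_deriv (by simp)
  have key := image_norm_le_of_norm_deriv_right_lt_deriv_boundary' (a := t₁) (b := t)
    (f := fun s => ξ s - ξ₀) (f' := ξ') (B := B) (B' := fun s => -Φ' s + δ)
    (fun s hs => ((hξ s hs.1).sub_const ξ₀).continuousAt.continuousWithinAt)
    (fun s hs => ((hξ s hs.1).sub_const ξ₀).hasDerivWithinAt)
    (by simp [hB])
    (fun s hs => (hBd s hs.1).continuousAt.continuousWithinAt)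
    (fun s hs => (hBd s hs.1).hasDerivWithinAt)
    (fun s hs h => by
      have h1 : ‖ξ s - ξ₀‖ < r := by rw [h]; exact hBr s hs.1 hs.2.le
      have := hbd s hs.1 h1
      linarith)
    (⟨ht, le_rfl⟩ : t ∈ Set.Icc t₁ t)
  exact key.trans_lt (hBr t ht le_rfl)

lemma dist_le_of_deriv {ξ ξ' : ℝ → E} {Φ Φ' : ℝ → ℝ} {s t : ℝ} (hst : s ≤ t)
    (hξ : ∀ u, s ≤ u → HasDerivAt ξ (ξ' u) u) (hΦ : ∀ u, s ≤ u → HasDerivAt Φ (Φ' u) u)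
    (hbd : ∀ u, s ≤ u → ‖ξ' u‖ ≤ -Φ' u) : ‖ξ t - ξ s‖ ≤ Φ s - Φ t :=
  image_norm_le_of_norm_deriv_right_le_deriv_boundary' (a := s) (b := t)
    (f := fun u => ξ u - ξ s) (f' := ξ') (B := fun u => Φ s - Φ u) (B' := fun u => -Φ' u)
    (fun u hu => ((hξ u hu.1).sub_const _).continuousAt.continuousWithinAt)
    (fun u hu => ((hξ u hu.1).sub_const _).hasDerivWithinAt)
    (by simp)
    (fun u hu => ((hΦ u hu.1).const_sub _).continuousAt.continuousWithinAt)
    (fun u hu => ((hΦ u hu.1).const_sub _).hasDerivWithinAt)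
    (fun u hu => hbd u hu.1)
    (⟨hst, le_rfl⟩ : t ∈ Set.Icc s t)

/-- Convergence at a polynomial rate when the energy stays above its limit `f ξ₀` at an accumulation
point `ξ₀`. With `H = f ∘ ξ - f ξ₀`, the Łojasiewicz inequality gives `‖ξ'‖ ≤ -Φ'` for
`Φ = K H ^ (1 - θ)` and `H' ≤ -c² H ^ (2θ)`; hence `‖ξ t - ξ₀‖ ≤ Φ t` and `H t = O(t ^ (-1 / (2θ - 1)))`. -/
lemma rate {f : E → ℝ} (hf : AnalyticOnNhd ℝ f Set.univ) {ξ : ℝ → E}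
    (hflow : ∀ t : ℝ, 0 ≤ t → HasDerivAt ξ (-(gradient f (ξ t))) t) {ξ₀ : E} {ψ : ℕ → ℝ}
    (hψ : Tendsto ψ atTop atTop) (hξψ : Tendsto (fun k => ξ (ψ k)) atTop (𝓝 ξ₀))
    (hpos : ∀ t, 0 ≤ t → f ξ₀ < f (ξ t)) :
    ∃ β : ℝ, 0 < β ∧ ∃ C : ℝ, 0 < C ∧ ∃ T : ℝ, 0 ≤ T ∧
        ∀ t : ℝ, T ≤ t → ‖ξ t - ξ₀‖ ≤ C * t ^ (-β) := by
  obtain ⟨c, hc, θ, hθ, hθ1, hL⟩ := lojasiewicz (hf ξ₀ trivial)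
  obtain ⟨r, hr, hL⟩ := Metric.eventually_nhds_iff_ball.1 hL
  set H : ℝ → ℝ := fun t => f (ξ t) - f ξ₀ with hH
  have hH0 : ∀ t, 0 ≤ t → 0 < H t := fun t ht => sub_pos.2 (hpos t ht)
  have hHd : ∀ t, 0 ≤ t → HasDerivAt H (-‖gradient f (ξ t)‖ ^ 2) t := fun t ht =>
    (hasDerivAt_energy (hf _ trivial).differentiableAt (hflow t ht)).sub_const _
  have hgL : ∀ t, 0 ≤ t → ‖ξ t - ξ₀‖ < r → c * H t ^ θ ≤ ‖gradient f (ξ t)‖ := by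
    intro t ht h
    have := hL (ξ t) (mem_ball_iff_norm.2 h)
    rwa [← norm_gradient, show f (ξ t) - f ξ₀ = H t from rfl, abs_of_pos (hH0 t ht)] at this
  set K := 1 / (c * (1 - θ)) with hK
  have hθ' : 0 < 1 - θ := by linarith
  have hKpos : 0 < K := by positivity
  set Φ : ℝ → ℝ := fun t => K * H t ^ (1 - θ) with hΦ
  set Φ' : ℝ → ℝ := fun t => -(1 / c * H t ^ (-θ) * ‖gradient f (ξ t)‖ ^ 2) with hΦ'
  have hΦ0 : ∀ t, 0 ≤ t → 0 ≤ Φ t := fun t ht =>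
    mul_nonneg hKpos.le (Real.rpow_nonneg (hH0 t ht).le _)
  have hΦd : ∀ t, 0 ≤ t → HasDerivAt Φ (Φ' t) t := by
    intro t ht
    have h1 := ((hHd t ht).rpow_const (p := 1 - θ) (Or.inl (hH0 t ht).ne')).const_mul K
    refine h1.congr_deriv ?_
    simp only [hΦ', hK]
    rw [show 1 - θ - 1 = -θ by ring]
    field_simp
  have hbd : ∀ t, 0 ≤ t → ‖ξ t - ξ₀‖ < r → ‖-(gradient f (ξ t))‖ ≤ -Φ' t := by
    intro t ht h
    have h1 := hgL t ht h
    simp only [hΦ', norm_neg, neg_neg]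
    set g := ‖gradient f (ξ t)‖
    have hpow : H t ^ (-θ) * H t ^ θ = 1 := by
      rw [← Real.rpow_add (hH0 t ht)]; simp
    have hg : 0 ≤ g := norm_nonneg _
    have hq : 0 < H t ^ (-θ) := Real.rpow_pos_of_pos (hH0 t ht) _
    calc g = 1 / c * H t ^ (-θ) * (c * H t ^ θ) * g := by
          have : 1 / c * H t ^ (-θ) * (c * H t ^ θ) = H t ^ (-θ) * H t ^ θ := by
            field_simp
          rw [this, hpow, one_mul]
      _ ≤ 1 / c * H t ^ (-θ) * g * g := by gcongr
      _ = _ := by ring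
  -- a late time from which the trajectory cannot leave the ball
  obtain ⟨t₁, ht₁, hstart⟩ : ∃ t₁, 0 ≤ t₁ ∧ ‖ξ t₁ - ξ₀‖ + Φ t₁ < r := by
    have h1 : Tendsto (fun k => ‖ξ (ψ k) - ξ₀‖) atTop (𝓝 0) :=
      tendsto_iff_norm_sub_tendsto_zero.1 hξψ
    have h2 : Tendsto (fun k => H (ψ k)) atTop (𝓝 0) := by
      have := ((hf ξ₀ trivial).continuousAt.tendsto.comp hξψ).sub_const (f ξ₀)
      simpa using this
    have h3 : Tendsto (fun k => Φ (ψ k)) atTop (𝓝 0) := by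
      have := (h2.rpow_const (p := 1 - θ) (Or.inr hθ'.le)).const_mul K
      simpa [Real.zero_rpow hθ'.ne'] using this
    have h4 := h1.add h3
    rw [add_zero] at h4
    obtain ⟨k, hk1, hk2⟩ := ((h4.eventually (gt_mem_nhds hr)).and
      (hψ.eventually_ge_atTop 0)).exists
    exact ⟨ψ k, hk2, hk1⟩
  have htrap : ∀ t, t₁ ≤ t → ‖ξ t - ξ₀‖ < r := fun t ht =>
    trapped (fun s hs => hflow s (ht₁.trans hs)) (fun s hs => hΦd s (ht₁.trans hs))
      (fun s hs => hΦ0 s (ht₁.trans hs)) hstart (fun s hs => hbd s (ht₁.trans hs)) ht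
  have hdist : ∀ t, t₁ ≤ t → ‖ξ t - ξ₀‖ ≤ Φ t := by
    intro t ht
    have h1 : Tendsto (fun k => ‖ξ (ψ k) - ξ t‖) atTop (𝓝 ‖ξ₀ - ξ t‖) :=
      (hξψ.sub_const _).norm
    rw [norm_sub_rev]
    refine le_of_tendsto h1 ?_
    filter_upwards [hψ.eventually_ge_atTop t] with k hk
    have h2 := dist_le_of_deriv hk (fun u hu => hflow u (ht₁.trans (ht.trans hu)))
      (fun u hu => hΦd u (ht₁.trans (ht.trans hu)))
      (fun u hu => hbd u (ht₁.trans (ht.trans hu)) (htrap u (ht.trans hu)))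
    have h3 := hΦ0 (ψ k) (ht₁.trans (ht.trans hk))
    linarith
  -- the power `H ^ (1 - 2θ)` grows at least linearly
  set κ := (2 * θ - 1) * c ^ 2 with hκ
  have hθ2 : 0 < 2 * θ - 1 := by linarith
  have hκpos : 0 < κ := by positivity
  have hW : ∀ t, t₁ ≤ t → κ * (t - t₁) ≤ H t ^ (1 - 2 * θ) := by
    intro t ht
    have hder : ∀ s, t₁ ≤ s → HasDerivAt (fun s => H s ^ (1 - 2 * θ))
        ((2 * θ - 1) * (H s ^ (-(2 * θ)) * ‖gradient f (ξ s)‖ ^ 2)) s := by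
      intro s hs
      refine ((hHd s (ht₁.trans hs)).rpow_const (p := 1 - 2 * θ)
        (Or.inl (hH0 s (ht₁.trans hs)).ne')).congr_deriv ?_
      rw [show 1 - 2 * θ - 1 = -(2 * θ) by ring]
      ring
    have h1 := dist_le_of_deriv (ξ := fun s => κ * s) (ξ' := fun _ => κ) ht
      (fun s _ => by simpa using (hasDerivAt_id s).const_mul κ) (fun s hs => (hder s hs).neg)
      (fun s hs => ?_)
    · have h2 : 0 ≤ H t₁ ^ (1 - 2 * θ) := Real.rpow_nonneg (hH0 t₁ ht₁).le _
      have h3 := le_abs_self (κ * t - κ * t₁)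
      simp only [Pi.neg_apply, Real.norm_eq_abs] at h1
      linarith
    · have hHs := hH0 s (ht₁.trans hs)
      have h2 := hgL s (ht₁.trans hs) (htrap s hs)
      have hpow : H s ^ (-(2 * θ)) * (H s ^ θ) ^ 2 = 1 := by
        rw [← Real.rpow_natCast (H s ^ θ), ← Real.rpow_mul hHs.le, ← Real.rpow_add hHs]
        simp [mul_comm]
      rw [neg_neg, Real.norm_of_nonneg hκpos.le]
      calc κ = (2 * θ - 1) * (H s ^ (-(2 * θ)) * (c * H s ^ θ) ^ 2) := by
            rw [mul_pow, mul_left_comm _ (c ^ 2), hpow, hκ, mul_one]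
        _ ≤ _ := by gcongr
  refine ⟨(1 - θ) / (2 * θ - 1), by positivity, K * (κ / 2) ^ (-((1 - θ) / (2 * θ - 1))),
    by positivity, max 1 (2 * t₁), by positivity, fun t ht => ?_⟩
  have h1 : 1 ≤ t := (le_max_left _ _).trans ht
  have h2 : 2 * t₁ ≤ t := (le_max_right _ _).trans ht
  refine (hdist t (by linarith)).trans ?_
  have hHt := hH0 t (by linarith)
  have h3 : κ / 2 * t ≤ H t ^ (1 - 2 * θ) := by
    have := hW t (by linarith)
    nlinarith
  have h4 : H t ^ (1 - θ) = (H t ^ (1 - 2 * θ)) ^ (-((1 - θ) / (2 * θ - 1))) := by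
    rw [← Real.rpow_mul hHt.le]
    congr 1
    rw [mul_neg, ← neg_mul, neg_sub, mul_div_cancel₀ _ hθ2.ne']
  rw [mul_assoc, ← Real.mul_rpow (by positivity) (by linarith)]
  simp only [hΦ]
  rw [h4]
  have hβ : 0 < (1 - θ) / (2 * θ - 1) := by positivity
  have htpos : 0 < κ / 2 * t := mul_pos (by positivity) (by linarith)
  exact mul_le_mul_of_nonneg_left
    (Real.rpow_le_rpow_of_nonpos htpos h3 (by linarith)) hKpos.le

/-- Convergence of bounded gradient trajectories of an analytic function on a finite-dimensional
inner product space: `rate` applies at an accumulation point, unless the energy attains its limit in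
finite time, in which case the trajectory has come to rest. -/
theorem flow_converges {f : E → ℝ} (hf : AnalyticOnNhd ℝ f Set.univ) {ξ : ℝ → E}
    (hflow : ∀ t : ℝ, 0 ≤ t → HasDerivAt ξ (-(gradient f (ξ t))) t)
    (hbdd : Bornology.IsBounded (ξ '' Set.Ici 0)) :
    ∃ ξ₀ : E, Tendsto ξ atTop (𝓝 ξ₀) ∧ gradient f ξ₀ = 0 ∧
      ∃ β : ℝ, 0 < β ∧ ∃ C : ℝ, 0 < C ∧ ∃ T : ℝ, 0 ≤ T ∧
        ∀ t : ℝ, T ≤ t → ‖ξ t - ξ₀‖ ≤ C * t ^ (-β) := by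
  obtain ⟨ξ₀, -, σ, hσ, hlim⟩ := tendsto_subseq_of_bounded hbdd
    (x := fun k : ℕ => ξ k) (fun k => ⟨k, by simp, rfl⟩)
  set ψ : ℕ → ℝ := fun k => σ k
  have hψ : Tendsto ψ atTop atTop := tendsto_natCast_atTop_atTop.comp hσ.tendsto_atTop
  have hξψ : Tendsto (fun k => ξ (ψ k)) atTop (𝓝 ξ₀) := hlim
  have hFd : ∀ t, 0 ≤ t → HasDerivAt (fun s => f (ξ s)) (-‖gradient f (ξ t)‖ ^ 2) t :=
    fun t ht => hasDerivAt_energy (hf _ trivial).differentiableAt (hflow t ht)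
  have hanti : AntitoneOn (fun s => f (ξ s)) (Set.Ici 0) := by
    refine antitoneOn_of_hasDerivWithinAt_nonpos (convex_Ici 0)
      (fun t ht => (hFd t ht).continuousAt.continuousWithinAt)
      (fun t ht => (hFd t (interior_subset ht)).hasDerivWithinAt) fun t _ => ?_
    have := sq_nonneg ‖gradient f (ξ t)‖
    linarith
  have hge : ∀ t, 0 ≤ t → f ξ₀ ≤ f (ξ t) := by
    intro t ht
    refine le_of_tendsto ((hf ξ₀ trivial).continuousAt.tendsto.comp hξψ) ?_
    filter_upwards [hψ.eventually_ge_atTop t] with k hk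
    exact hanti ht (ht.trans hk : (0 : ℝ) ≤ ψ k) hk
  have hrate : ∃ β : ℝ, 0 < β ∧ ∃ C : ℝ, 0 < C ∧ ∃ T : ℝ, 0 ≤ T ∧
        ∀ t : ℝ, T ≤ t → ‖ξ t - ξ₀‖ ≤ C * t ^ (-β) := by
    by_cases hpos : ∀ t, 0 ≤ t → f ξ₀ < f (ξ t)
    · exact rate hf hflow hψ hξψ hpos
    -- once the limiting energy is attained, the trajectory is at rest
    push Not at hpos
    obtain ⟨t₁, ht₁, hle⟩ := hpos
    have hconst : ∀ t, t₁ ≤ t → f (ξ t) = f ξ₀ := fun t ht =>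
      le_antisymm ((hanti ht₁ (ht₁.trans ht : (0 : ℝ) ≤ t) ht).trans hle) (hge t (ht₁.trans ht))
    have hrest : ∀ t, t₁ < t → gradient f (ξ t) = 0 := by
      intro t ht
      have h1 : HasDerivAt (fun s => f (ξ s)) 0 t :=
        (hasDerivAt_const t (f ξ₀)).congr_of_eventuallyEq
          ((lt_mem_nhds ht).mono fun s hs => hconst s hs.le)
      have h2 := h1.unique (hFd t (ht₁.trans ht.le))
      have h3 : ‖gradient f (ξ t)‖ ^ 2 = 0 := by linarith
      simpa using h3
    have heq : ∀ t, t₁ + 1 ≤ t → ξ t = ξ (t₁ + 1) := by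
      intro t ht
      have := dist_le_of_deriv (Φ := fun _ => 0) (Φ' := fun _ => 0) ht
        (fun u hu => hflow u (by linarith)) (fun u _ => hasDerivAt_const u 0)
        (fun u hu => by rw [hrest u (by linarith)]; simp)
      rw [sub_zero] at this
      exact sub_eq_zero.1 (norm_le_zero_iff.1 this)
    have hξ₀ : ξ₀ = ξ (t₁ + 1) := by
      refine tendsto_nhds_unique hξψ (tendsto_const_nhds.congr' ?_)
      filter_upwards [hψ.eventually_ge_atTop (t₁ + 1)] with k hk
      exact (heq _ hk).symm
    refine ⟨1, one_pos, 1, one_pos, t₁ + 1, by linarith, fun t ht => ?_⟩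
    rw [heq t ht, hξ₀, sub_self, norm_zero, one_mul]
    exact Real.rpow_nonneg (by linarith) _
  have htend : Tendsto ξ atTop (𝓝 ξ₀) := by
    obtain ⟨β, hβ, C, hC, T, hT, h⟩ := hrate
    rw [tendsto_iff_norm_sub_tendsto_zero]
    refine squeeze_zero' (Eventually.of_forall fun _ => norm_nonneg _)
      ((eventually_ge_atTop T).mono h) ?_
    simpa using (tendsto_rpow_neg_atTop hβ).const_mul C
  refine ⟨ξ₀, htend, ?_, hrate⟩
  -- the energy converges, and so does its derivative, which must then tend to `0`
  have hmvt : ∀ k : ℕ, ∃ s : ℝ, (k : ℝ) ≤ s ∧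
      -‖gradient f (ξ s)‖ ^ 2 = f (ξ ((k : ℝ) + 1)) - f (ξ k) := by
    intro k
    have hk : (0 : ℝ) ≤ k := k.cast_nonneg
    obtain ⟨s, hs, h⟩ := exists_hasDerivAt_eq_slope (fun s => f (ξ s))
      (fun s => -‖gradient f (ξ s)‖ ^ 2) (show (k : ℝ) < k + 1 by linarith)
      (fun t ht => (hFd t (hk.trans ht.1)).continuousAt.continuousWithinAt)
      (fun t ht => hFd t (hk.trans ht.1.le))
    exact ⟨s, hs.1.le, by rw [h]; simp⟩
  choose s hs hsd using hmvt
  have hf₀ := (hf ξ₀ trivial).continuousAt.tendsto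
  have hstend : Tendsto s atTop atTop := tendsto_atTop_mono hs tendsto_natCast_atTop_atTop
  have l1 : Tendsto (fun k : ℕ => f (ξ ((k : ℝ) + 1)) - f (ξ k)) atTop (𝓝 (f ξ₀ - f ξ₀)) :=
    ((hf₀.comp htend).comp (tendsto_atTop_add_const_right _ 1 tendsto_natCast_atTop_atTop)).sub
      ((hf₀.comp htend).comp tendsto_natCast_atTop_atTop)
  have l2 : Tendsto (fun k : ℕ => -‖gradient f (ξ (s k))‖ ^ 2) atTop
      (𝓝 (-‖gradient f ξ₀‖ ^ 2)) := by
    simp only [norm_gradient]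
    exact (((hf ξ₀ trivial).fderiv.continuousAt.tendsto.comp
      (htend.comp hstend)).norm.pow 2).neg
  simp only [hsd] at l2
  have := tendsto_nhds_unique l1 l2
  have h0 : ‖gradient f ξ₀‖ ^ 2 = 0 := by linarith
  simpa using h0

end Flow

end Loj

/-- A bounded trajectory of the negative gradient flow of a globally
real-analytic function `f : ℝⁿ → ℝ` converges to a unique limit `ξ₀`, which is a critical
point of `f`, at a polynomial rate `|ξ(t) - ξ₀| ≤ C · t^(-β)`. -/
theorem bounded_analytic_gradient_flow_converges_polynomially
    (n : ℕ) (hn : 1 ≤ n)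
    (f : EuclideanSpace ℝ (Fin n) → ℝ)
    (hf : AnalyticOnNhd ℝ f Set.univ)
    (ξ : ℝ → EuclideanSpace ℝ (Fin n))
    (hflow : ∀ t : ℝ, 0 ≤ t → HasDerivAt ξ (-(gradient f (ξ t))) t)
    (hbdd : Bornology.IsBounded (ξ '' Set.Ici 0)) :
    ∃ ξ₀ : EuclideanSpace ℝ (Fin n),
      Filter.Tendsto ξ Filter.atTop (nhds ξ₀) ∧
      gradient f ξ₀ = 0 ∧
      ∃ β : ℝ, 0 < β ∧ ∃ C : ℝ, 0 < C ∧ ∃ T : ℝ, 0 ≤ T ∧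
        ∀ t : ℝ, T ≤ t → ‖ξ t - ξ₀‖ ≤ C * t ^ (-β) :=
  Loj.flow_converges hf hflow hbdd
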